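/- arXiv:1502.01149 — 2 statements merged into one kernel-verified Lean document; each statement's English description precedes it below -/
import Mathlib

section
/- Let φ : ℝ⁴ → ℝ⁴ be a continuous map such that for all r₁, r₂ ∈ ℝ⁴, ⟨r₁−r₂, r₁−r₂⟩ = 0 implies ⟨φ(r₁)−φ(r₂), φ(r₁)−φ(r₂)⟩ = 0. Then either there exist a positive real number k, a 4×4 real matrix Q with Q·M·Qᵗ = M where M = diag(−1,−1,−1,1), and a vector a ∈ ℝ⁴ such that φ(r) = k·Q·r + a for all r ∈ ℝ⁴, or there exists s′ ∈ ℝ⁴ such that the range of φ is contained in the light cone {s ∈ ℝ⁴ : ⟨s−s′, s−s′⟩ = 0}. -/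
/-!
Call two points coherent if their difference is null. Suppose the range of `φ` lies in no light cone
(`NonDeg φ`).

*Injectivity.* `φ` maps null lines into null lines. If two points of a null line had the same image,
then the null lines through one of them would have image directions depending locally constantly on
the line (`NonDeg.sameDir_eventually`), hence, by connectedness, one common image direction; a
suitable transversal null line rules this out (`NonDeg.injective_of_coherent`). Generic null lines
meeting two given cones then give injectivity and the preservation of coherency in both directions
(`NonDeg.injective`, `NonDeg.coherent_of_image`), summarised as `Rigid φ`.

*Affinity along null lines.* Normalise `Φ 0 = 0`, and conjugate `Φ` by the inversion
`x ↦ x / ⟨x, x⟩`, which turns the cones with vertex on a null line through `0` into parallel null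
hyperplanes. The resulting map `invMap Φ` therefore sends each hyperplane `⟨η, n⟩ = u`, `n` null, into
a hyperplane `⟨·, Φ n⟩ = g u` (`Rigid.invMap_bil`). Comparing the four null directions `nullB` with one
further null direction `n` shows that the second differences of `g` vanish locally, so `g` is affine on
the half-line (`affine_of_local_midpoint`). Undoing the inversion, `φ` is fractional linear on each
null half-line in the directions `nullA`; having no pole for any base point, it is affine on these null
lines (`affine_of_fractional`, `Rigid.line_affine`).

*Conclusion.* The image of a parallelogram with sides in `nullA` is a parallelogram
(`Rigid.parallelogram`), so `φ` is affine. A linear map preserving null vectors scales the Minkowski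
form (`conformal_of_null`), and the factor is positive because no two orthogonal vectors are both
timelike.
-/

open Matrix

/-- The Lorentz–Minkowski inner product on `ℝ⁴`. -/
noncomputable def lorentzMink (r s : Fin 4 → ℝ) : ℝ :=
  -(r 0 * s 0) - r 1 * s 1 - r 2 * s 2 + r 3 * s 3

/-- The matrix `M = diag(-1,-1,-1,1)`. -/
noncomputable def minkMatrix : Matrix (Fin 4) (Fin 4) ℝ :=
  Matrix.diagonal ![-1, -1, -1, 1]

open Filter Topology

local notation "𝔹" => lorentzMink

/-! ### The Minkowski form and null vectors -/

lemma bil_add_left (x y z : Fin 4 → ℝ) : 𝔹 (x + y) z = 𝔹 x z + 𝔹 y z := by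
  simp only [lorentzMink, Pi.add_apply]; ring

lemma bil_add_right (x y z : Fin 4 → ℝ) : 𝔹 x (y + z) = 𝔹 x y + 𝔹 x z := by
  simp only [lorentzMink, Pi.add_apply]; ring

lemma bil_sub_left (x y z : Fin 4 → ℝ) : 𝔹 (x - y) z = 𝔹 x z - 𝔹 y z := by
  simp only [lorentzMink, Pi.sub_apply]; ring

lemma bil_sub_right (x y z : Fin 4 → ℝ) : 𝔹 x (y - z) = 𝔹 x y - 𝔹 x z := by
  simp only [lorentzMink, Pi.sub_apply]; ring

lemma bil_smul_left (a : ℝ) (x y : Fin 4 → ℝ) : 𝔹 (a • x) y = a * 𝔹 x y := by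
  simp only [lorentzMink, Pi.smul_apply, smul_eq_mul]; ring

lemma bil_smul_right (a : ℝ) (x y : Fin 4 → ℝ) : 𝔹 x (a • y) = a * 𝔹 x y := by
  simp only [lorentzMink, Pi.smul_apply, smul_eq_mul]; ring

lemma bil_comm (x y : Fin 4 → ℝ) : 𝔹 x y = 𝔹 y x := by
  simp only [lorentzMink]; ring

lemma bil_sub_swap (x y : Fin 4 → ℝ) : 𝔹 (x - y) (x - y) = 𝔹 (y - x) (y - x) := by
  simp only [lorentzMink, Pi.sub_apply]; ring

lemma bil_zero_left (y : Fin 4 → ℝ) : 𝔹 0 y = 0 := by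
  simp [lorentzMink]

lemma bil_continuous : Continuous fun z : (Fin 4 → ℝ) × (Fin 4 → ℝ) => 𝔹 z.1 z.2 := by
  unfold lorentzMink; fun_prop

@[fun_prop]
lemma Continuous.bil {X : Type*} [TopologicalSpace X] {f g : X → Fin 4 → ℝ}
    (hf : Continuous f) (hg : Continuous g) : Continuous fun x => 𝔹 (f x) (g x) :=
  bil_continuous.comp (hf.prodMk hg)

/-- The only null vector with vanishing time coordinate is `0`. -/
lemma three_ne_zero_of_null {u : Fin 4 → ℝ} (hu : 𝔹 u u = 0) (h : u ≠ 0) : u 3 ≠ 0 := by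
  intro h3
  apply h
  simp only [lorentzMink, h3] at hu
  ext i
  fin_cases i
  · simp; nlinarith [sq_nonneg (u 0), sq_nonneg (u 1), sq_nonneg (u 2)]
  · simp; nlinarith [sq_nonneg (u 0), sq_nonneg (u 1), sq_nonneg (u 2)]
  · simp; nlinarith [sq_nonneg (u 0), sq_nonneg (u 1), sq_nonneg (u 2)]
  · simpa using h3

/-- Orthogonal null vectors are parallel (equality case of Cauchy–Schwarz); the factor is read off
from the time coordinates. -/
lemma parallel_of_null {u v : Fin 4 → ℝ} (hu : 𝔹 u u = 0) (hv : 𝔹 v v = 0) (huv : 𝔹 u v = 0)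
    (h : u ≠ 0) : v = (v 3 / u 3) • u := by
  have h3 := three_ne_zero_of_null hu h
  have key : (u 3 * v 0 - v 3 * u 0) ^ 2 + (u 3 * v 1 - v 3 * u 1) ^ 2
      + (u 3 * v 2 - v 3 * u 2) ^ 2 = 0 := by
    simp only [lorentzMink] at hu hv huv
    linear_combination (-(v 3) ^ 2) * hu - (u 3) ^ 2 * hv + 2 * u 3 * v 3 * huv
  have h0 : u 3 * v 0 - v 3 * u 0 = 0 := by
    nlinarith [sq_nonneg (u 3 * v 0 - v 3 * u 0), sq_nonneg (u 3 * v 1 - v 3 * u 1),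
      sq_nonneg (u 3 * v 2 - v 3 * u 2)]
  have h1 : u 3 * v 1 - v 3 * u 1 = 0 := by
    nlinarith [sq_nonneg (u 3 * v 0 - v 3 * u 0), sq_nonneg (u 3 * v 1 - v 3 * u 1),
      sq_nonneg (u 3 * v 2 - v 3 * u 2)]
  have h2 : u 3 * v 2 - v 3 * u 2 = 0 := by
    nlinarith [sq_nonneg (u 3 * v 0 - v 3 * u 0), sq_nonneg (u 3 * v 1 - v 3 * u 1),
      sq_nonneg (u 3 * v 2 - v 3 * u 2)]
  ext i
  fin_cases i <;> simp <;> field_simp <;> linarith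

/-- A null vector orthogonal to the nonzero null vector `u` is parallel to `u`, so it is orthogonal to
everything `u` is orthogonal to. -/
lemma orth_trans {u v w : Fin 4 → ℝ} (h : u ≠ 0) (hu : 𝔹 u u = 0) (hv : 𝔹 v v = 0)
    (huv : 𝔹 u v = 0) (huw : 𝔹 u w = 0) : 𝔹 v w = 0 := by
  rw [parallel_of_null hu hv huv h, bil_smul_left, huw, mul_zero]

lemma orth_of_null {u v : Fin 4 → ℝ} (hu : 𝔹 u u = 0) (hv : 𝔹 v v = 0)
    (huv : 𝔹 (u - v) (u - v) = 0) : 𝔹 u v = 0 := by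
  simp only [lorentzMink, Pi.sub_apply] at *; linarith

/-- A cubic that is not constant vanishes at no point of a punctured neighbourhood of `0`. -/
lemma eventually_cubic_ne (a b c d : ℝ) (h : b ≠ 0 ∨ c ≠ 0 ∨ d ≠ 0) :
    ∀ᶠ ε in 𝓝[≠] (0 : ℝ), a + b * ε + c * ε ^ 2 + d * ε ^ 3 ≠ 0 := by
  classical
  open Polynomial in
  set p : ℝ[X] := C a + C b * X + C c * X ^ 2 + C d * X ^ 3 with hp
  have hp0 : p ≠ 0 := by
    intro h0
    rcases h with h | h | h
    · apply h
      have := congrArg (fun r => Polynomial.coeff r 1) h0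
      simpa [hp, Polynomial.coeff_X, Polynomial.coeff_C, Polynomial.coeff_X_pow] using this
    · apply h
      have := congrArg (fun r => Polynomial.coeff r 2) h0
      simpa [hp, Polynomial.coeff_X, Polynomial.coeff_C, Polynomial.coeff_X_pow] using this
    · apply h
      have := congrArg (fun r => Polynomial.coeff r 3) h0
      simpa [hp, Polynomial.coeff_X, Polynomial.coeff_C, Polynomial.coeff_X_pow] using this
  have hfin : (p.roots.toFinset : Set ℝ).Finite := p.roots.toFinset.finite_toSet
  have hfin2 : ((p.roots.toFinset : Set ℝ) \ {0}).Finite := hfin.subset Set.sdiff_subset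
  have hmem : ((p.roots.toFinset : Set ℝ) \ {0})ᶜ ∈ 𝓝 (0 : ℝ) :=
    hfin2.isClosed.isOpen_compl.mem_nhds (by simp)
  filter_upwards [mem_nhdsWithin_of_mem_nhds hmem, self_mem_nhdsWithin] with ε h1 h2 h3
  apply h1
  refine ⟨?_, h2⟩
  simp only [Finset.mem_coe, Multiset.mem_toFinset]
  rw [Polynomial.mem_roots hp0]
  simpa [hp, Polynomial.IsRoot] using h3

/-! ### Nondegenerate coherency preservers -/

/-- A continuous coherency preserver whose range lies in no light cone. Two points are *coherent*
if their difference is null. -/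
structure NonDeg (φ : (Fin 4 → ℝ) → (Fin 4 → ℝ)) : Prop where
  cont : Continuous φ
  pres : ∀ x y, 𝔹 (x - y) (x - y) = 0 → 𝔹 (φ x - φ y) (φ x - φ y) = 0
  nondeg : ∀ c, ∃ x, 𝔹 (φ x - c) (φ x - c) ≠ 0

/-- The unit vector of the time axis. -/
def timeVec : Fin 4 → ℝ := ![0, 0, 0, 1]

lemma bil_shift (x p n : Fin 4 → ℝ) (ε : ℝ) :
    𝔹 (x + ε • timeVec - p) n = 𝔹 (x - p) n + n 3 * ε := by
  have h : 𝔹 timeVec n = n 3 := by simp [lorentzMink, timeVec]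
  rw [add_sub_right_comm, bil_add_left, bil_smul_left, h]; ring

lemma bil_shift_self (x p : Fin 4 → ℝ) (ε : ℝ) :
    𝔹 (x + ε • timeVec - p) (x + ε • timeVec - p)
      = 𝔹 (x - p) (x - p) + 2 * (x - p) 3 * ε + ε ^ 2 := by
  have h : (x + ε • timeVec - p) 3 = (x - p) 3 + ε := by
    have h1 : timeVec 3 = 1 := rfl
    simp only [Pi.sub_apply, Pi.add_apply, Pi.smul_apply, smul_eq_mul, h1]; ring
  rw [bil_shift, bil_comm, bil_shift, h]; ring

/-- A point mapped outside a given cone may be chosen generic: it suffices that the genericity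
condition holds after all small nonzero shifts along the time axis. -/
lemma NonDeg.exists_generic {φ : (Fin 4 → ℝ) → (Fin 4 → ℝ)} (h : NonDeg φ) (c : Fin 4 → ℝ)
    (P : (Fin 4 → ℝ) → Prop) (hP : ∀ x, ∀ᶠ ε in 𝓝[≠] (0 : ℝ), P (x + ε • timeVec)) :
    ∃ x, 𝔹 (φ x - c) (φ x - c) ≠ 0 ∧ P x := by
  obtain ⟨x, hx⟩ := h.nondeg c
  have hφ := h.cont
  have hc : Continuous fun ε : ℝ => 𝔹 (φ (x + ε • timeVec) - c) (φ (x + ε • timeVec) - c) := by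
    fun_prop
  have h1 : ∀ᶠ ε in 𝓝 (0 : ℝ), 𝔹 (φ (x + ε • timeVec) - c) (φ (x + ε • timeVec) - c) ≠ 0 :=
    hc.continuousAt.eventually_ne (by simpa using hx)
  obtain ⟨ε, h2, h3⟩ := ((h1.filter_mono nhdsWithin_le_nhds).and (hP x)).exists
  exact ⟨_, h2, h3⟩

/-- If `a`, `b`, `x` are pairwise coherent, `a` and `b` are mapped into the cone of `c` and `x` is
not, then `φ a = φ b`: otherwise the null line through `φ a` and `φ b` would pass through `c`. -/
lemma NonDeg.eq_of_cone {φ : (Fin 4 → ℝ) → (Fin 4 → ℝ)} (h : NonDeg φ) {a b x c : Fin 4 → ℝ}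
    (hab : 𝔹 (a - b) (a - b) = 0) (hxa : 𝔹 (x - a) (x - a) = 0) (hxb : 𝔹 (x - b) (x - b) = 0)
    (ha : 𝔹 (φ a - c) (φ a - c) = 0) (hb : 𝔹 (φ b - c) (φ b - c) = 0)
    (hx : 𝔹 (φ x - c) (φ x - c) ≠ 0) : φ a = φ b := by
  by_contra hne
  have h1 := h.pres _ _ hab
  have h2 := h.pres _ _ hxa
  have h3 := h.pres _ _ hxb
  apply hx
  have key : 𝔹 (φ a - c) (φ x - φ a) = 0 := by
    refine orth_trans (sub_ne_zero.2 hne) h1 ha ?_ ?_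
    · simp only [lorentzMink, Pi.sub_apply] at *; linarith
    · simp only [lorentzMink, Pi.sub_apply] at *; linarith
  simp only [lorentzMink, Pi.sub_apply] at *; linarith

/-- The point of the null line `p + ℝ n` coherent to `x`. -/
lemma null_line_meet {p n x : Fin 4 → ℝ} (hn : 𝔹 n n = 0) (hB : 𝔹 (x - p) n ≠ 0) :
    𝔹 (x - (p + (𝔹 (x - p) (x - p) / (2 * 𝔹 (x - p) n)) • n))
      (x - (p + (𝔹 (x - p) (x - p) / (2 * 𝔹 (x - p) n)) • n)) = 0 := by
  set t := 𝔹 (x - p) (x - p) / (2 * 𝔹 (x - p) n) with ht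
  have h1 : t * (2 * 𝔹 (x - p) n) = 𝔹 (x - p) (x - p) := by rw [ht]; field_simp
  rw [← sub_sub]
  clear_value t
  generalize x - p = w at *
  rw [bil_sub_left, bil_sub_right, bil_sub_right, bil_smul_left, bil_smul_left,
    bil_smul_right, bil_smul_right, hn, bil_comm n w]
  linarith

lemma NonDeg.nonconst {φ : (Fin 4 → ℝ) → (Fin 4 → ℝ)} (h : NonDeg φ) (p : Fin 4 → ℝ)
    {n : Fin 4 → ℝ} (hn : 𝔹 n n = 0) (hn0 : n ≠ 0) : ∃ t : ℝ, φ (p + t • n) ≠ φ p := by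
  by_contra! hcon
  have h3 := three_ne_zero_of_null hn hn0
  obtain ⟨x, hx, hP⟩ := h.exists_generic (φ p) (fun x => 𝔹 (x - p) n ≠ 0) (by
    intro x
    filter_upwards [eventually_cubic_ne (𝔹 (x - p) n) (n 3) 0 0 (Or.inl h3)] with ε hε
    rw [bil_shift]; simpa using hε)
  apply hx
  have := h.pres _ _ (null_line_meet hn hP)
  rwa [hcon] at this

/-- Let `p`, `q` be coherent and let `p + ℝ n` be a null line not through `q`. Then there is a transversal null line, of direction `k`, meeting `p + ℝ n` and the cone of `q` in
two distinct points, whose image is not contained in the cone of `φ p`. -/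
lemma NonDeg.exists_transversal {φ : (Fin 4 → ℝ) → (Fin 4 → ℝ)} (h : NonDeg φ)
    {p q n : Fin 4 → ℝ} (hpq : 𝔹 (p - q) (p - q) = 0) (hn : 𝔹 n n = 0) (hB : 𝔹 n (q - p) ≠ 0) :
    ∃ (t s : ℝ) (k : Fin 4 → ℝ), 𝔹 k k = 0 ∧ t ≠ 0 ∧ s ≠ 0 ∧ 𝔹 n k ≠ 0 ∧
      𝔹 (p + t • n + s • k - q) (p + t • n + s • k - q) = 0 ∧
      𝔹 (φ (p + t • n + k) - φ p) (φ (p + t • n + k) - φ p) ≠ 0 := by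
  have hn0 : n ≠ 0 := by rintro rfl; simp [bil_zero_left] at hB
  have h3 := three_ne_zero_of_null hn hn0
  obtain ⟨x, hx, hP1, hP2, hP3⟩ := h.exists_generic (φ p) (fun x => 𝔹 (x - p) n ≠ 0 ∧
      𝔹 (x - p) (x - p) ≠ 0 ∧
      𝔹 (x - q) (x - q) * 𝔹 (x - p) n - 𝔹 (x - p) (x - p) * 𝔹 (p - q) n ≠ 0) (by
    intro x
    filter_upwards [eventually_cubic_ne (𝔹 (x - p) n) (n 3) 0 0 (Or.inl h3),
      eventually_cubic_ne (𝔹 (x - p) (x - p)) (2 * (x - p) 3) 1 0 (Or.inr (Or.inl one_ne_zero)),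
      eventually_cubic_ne
        (𝔹 (x - q) (x - q) * 𝔹 (x - p) n - 𝔹 (x - p) (x - p) * 𝔹 (p - q) n)
        (2 * (x - q) 3 * 𝔹 (x - p) n + 𝔹 (x - q) (x - q) * n 3 - 2 * (x - p) 3 * 𝔹 (p - q) n)
        (𝔹 (x - p) n + 2 * (x - q) 3 * n 3 - 𝔹 (p - q) n)
        (n 3) (Or.inr (Or.inr h3))] with ε h1 h2 h3
    refine ⟨?_, ?_, ?_⟩
    · rw [bil_shift]; simpa using h1
    · rw [bil_shift_self]; simpa using h2
    · rw [bil_shift_self, bil_shift_self, bil_shift]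
      convert h3 using 1
      ring)
  set t := 𝔹 (x - p) (x - p) / (2 * 𝔹 (x - p) n) with ht
  have ht1 : t * (2 * 𝔹 (x - p) n) = 𝔹 (x - p) (x - p) := by rw [ht]; field_simp
  have ht0 : t ≠ 0 := by rw [ht]; positivity
  have hk := null_line_meet hn hP1
  rw [← ht] at hk
  set k := x - (p + t • n) with hkdef
  have hxk : p + t • n + k = x := by rw [hkdef]; abel
  have hnk : 𝔹 n k = 𝔹 (x - p) n := by
    rw [hkdef]; simp only [lorentzMink, Pi.sub_apply, Pi.add_apply, Pi.smul_apply, smul_eq_mul] at *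
    linear_combination (-t) * hn
  have hQ1 : 𝔹 (p + t • n - q) (p + t • n - q) = 2 * t * 𝔹 (p - q) n := by
    simp only [lorentzMink, Pi.sub_apply, Pi.add_apply, Pi.smul_apply, smul_eq_mul] at *
    linear_combination hpq + t ^ 2 * hn
  have hB' : 𝔹 (p - q) n ≠ 0 := by
    intro h0; apply hB
    simp only [lorentzMink, Pi.sub_apply] at *; linarith
  have hQ2 : 2 * 𝔹 (p + t • n - q) k = 𝔹 (x - q) (x - q) - 2 * t * 𝔹 (p - q) n := by
    rw [← hQ1, ← hxk]
    simp only [lorentzMink, Pi.sub_apply, Pi.add_apply, Pi.smul_apply, smul_eq_mul] at hk ⊢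
    linear_combination -hk
  have hne : 𝔹 (p + t • n - q) k ≠ 0 := by
    intro h0
    apply hP3
    rw [h0] at hQ2
    rw [← ht1]
    linear_combination (-𝔹 (x - p) n) * hQ2
  refine ⟨t, -(2 * t * 𝔹 (p - q) n) / (2 * 𝔹 (p + t • n - q) k), k, hk, ht0, ?_, ?_, ?_, ?_⟩
  · have : (2 * t * 𝔹 (p - q) n) ≠ 0 := by positivity
    exact div_ne_zero (neg_ne_zero.2 this) (by positivity)
  · rw [hnk]; exact hP1
  · set s := -(2 * t * 𝔹 (p - q) n) / (2 * 𝔹 (p + t • n - q) k) with hs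
    have hs1 : s * (2 * 𝔹 (p + t • n - q) k) = -(2 * t * 𝔹 (p - q) n) := by rw [hs]; field_simp
    have : p + t • n + s • k - q = (p + t • n - q) + s • k := by abel
    rw [this, bil_add_left, bil_add_right, bil_add_right, bil_smul_left, bil_smul_left,
      bil_smul_right, bil_smul_right, hk, bil_comm k]
    linarith
  · rw [hxk]; exact hx

/-! ### Injectivity on null lines -/

/-- The null lines through `p` of directions `n` and `m` have images on a common null line. -/
def SameDir (φ : (Fin 4 → ℝ) → (Fin 4 → ℝ)) (p n m : Fin 4 → ℝ) : Prop :=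
  ∀ s t : ℝ, 𝔹 (φ (p + s • n) - φ p) (φ (p + t • m) - φ p) = 0

lemma NonDeg.null_img {φ : (Fin 4 → ℝ) → (Fin 4 → ℝ)} (h : NonDeg φ) (p : Fin 4 → ℝ)
    {n : Fin 4 → ℝ} (hn : 𝔹 n n = 0) (t : ℝ) :
    𝔹 (φ (p + t • n) - φ p) (φ (p + t • n) - φ p) = 0 := by
  apply h.pres
  rw [add_sub_cancel_left, bil_smul_left, bil_smul_right, hn]; simp

lemma NonDeg.sameDir_refl {φ : (Fin 4 → ℝ) → (Fin 4 → ℝ)} (h : NonDeg φ) (p : Fin 4 → ℝ)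
    {n : Fin 4 → ℝ} (hn : 𝔹 n n = 0) : SameDir φ p n n := by
  intro s t
  refine orth_of_null (h.null_img p hn s) (h.null_img p hn t) ?_
  rw [sub_sub_sub_cancel_right]
  apply h.pres
  rw [add_sub_add_left_eq_sub, ← sub_smul, bil_smul_left, bil_smul_right, hn]; simp

lemma SameDir.symm {φ : (Fin 4 → ℝ) → (Fin 4 → ℝ)} {p n m : Fin 4 → ℝ}
    (h : SameDir φ p n m) : SameDir φ p m n := fun s t => by rw [bil_comm]; exact h t s

lemma NonDeg.sameDir_trans {φ : (Fin 4 → ℝ) → (Fin 4 → ℝ)} (h : NonDeg φ) {p n m l : Fin 4 → ℝ}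
    (hn : 𝔹 n n = 0) (hm : 𝔹 m m = 0) (hm0 : m ≠ 0)
    (h1 : SameDir φ p n m) (h2 : SameDir φ p m l) : SameDir φ p n l := by
  intro s t
  obtain ⟨r, hr⟩ := h.nonconst p hm hm0
  exact orth_trans (sub_ne_zero.2 hr) (h.null_img p hm r) (h.null_img p hn s)
    (h1.symm r s) (h2 r t)

lemma SameDir.neg_left {φ : (Fin 4 → ℝ) → (Fin 4 → ℝ)} {p n m : Fin 4 → ℝ}
    (h : SameDir φ p n m) : SameDir φ p (-n) m := fun s t => by
  have := h (-s) t
  rwa [neg_smul, ← smul_neg] at this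

/-- If `φ p = φ q` for coherent `p`, `q`, the image direction of a null line through `p` is a
locally constant function of its direction. The transversal through `p + ℝ n` and the cone of `q`
is moved by fixing its point `q'` on the cone of `q`; its point on the cone of `p` keeps the image
`φ q'`. -/
lemma NonDeg.sameDir_eventually {φ : (Fin 4 → ℝ) → (Fin 4 → ℝ)} (h : NonDeg φ)
    {p q n : Fin 4 → ℝ} (he : φ p = φ q) (hpq : 𝔹 (p - q) (p - q) = 0) (hn : 𝔹 n n = 0)
    (hB : 𝔹 n (q - p) ≠ 0) : ∀ᶠ m in 𝓝 n, 𝔹 m m = 0 → SameDir φ p n m := by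
  obtain ⟨t, s, k, hk, ht, hs, hnk, hq', hx⟩ := h.exists_transversal hpq hn hB
  have hφ := h.cont
  set q' := p + t • n + s • k with hq'def
  have e1 : φ (p + t • n) = φ q' := by
    refine h.eq_of_cone (c := φ p) (x := p + t • n + k) ?_ ?_ ?_ (h.null_img p hn t) ?_ hx
    · have : p + t • n - q' = (-s) • k := by rw [hq'def]; module
      rw [this, bil_smul_left, bil_smul_right, hk]; simp
    · rw [add_sub_cancel_left]; exact hk
    · have : p + t • n + k - q' = (1 - s) • k := by rw [hq'def]; module
      rw [this, bil_smul_left, bil_smul_right, hk]; simp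
    · rw [he]; exact h.pres _ _ hq'
  have hne : φ (p + t • n) ≠ φ p := by
    intro h0
    apply hx
    rw [← h0]
    apply h.pres
    rw [add_sub_cancel_left]; exact hk
  have hqn : 𝔹 (q' - p) n = s * 𝔹 n k := by
    have : q' - p = t • n + s • k := by rw [hq'def]; module
    rw [this, bil_add_left, bil_smul_left, bil_smul_left, hn, bil_comm k]; ring
  have hqq : 𝔹 (q' - p) (q' - p) = 2 * t * s * 𝔹 n k := by
    have : q' - p = t • n + s • k := by rw [hq'def]; module
    rw [this]
    simp only [bil_add_left, bil_add_right, bil_smul_left, bil_smul_right]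
    rw [hn, hk, bil_comm k]; ring
  have hqn0 : 𝔹 (q' - p) n ≠ 0 := by rw [hqn]; exact mul_ne_zero hs hnk
  set T : (Fin 4 → ℝ) → ℝ := fun m => 𝔹 (q' - p) (q' - p) / (2 * 𝔹 (q' - p) m) with hT
  have hTn : T n = t := by
    simp only [hT]; rw [hqq, hqn]; field_simp
  have hTc : ContinuousAt T n := by
    have hc : Continuous fun m : Fin 4 → ℝ => 2 * 𝔹 (q' - p) m := by fun_prop
    exact continuousAt_const.div hc.continuousAt (by simpa using hqn0)
  set X : (Fin 4 → ℝ) → (Fin 4 → ℝ) :=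
    fun m => q' + ((s - 1) / s) • (p + T m • m - q') with hX
  have hXn : X n = p + t • n + k := by
    simp only [hX, hTn, hq'def]
    have : p + t • n - (p + t • n + s • k) = (-s) • k := by module
    rw [this, smul_smul]
    have : (s - 1) / s * -s = 1 - s := by field_simp; ring
    rw [this]; module
  have hXc : ContinuousAt X n := by
    simp only [hX]; fun_prop
  have ev1 : ∀ᶠ m in 𝓝 n, 𝔹 (φ (X m) - φ p) (φ (X m) - φ p) ≠ 0 := by
    have hc : Continuous fun y => 𝔹 (φ y - φ p) (φ y - φ p) := by fun_prop
    have : ContinuousAt (fun m => 𝔹 (φ (X m) - φ p) (φ (X m) - φ p)) n :=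
      ContinuousAt.comp (g := fun y => 𝔹 (φ y - φ p) (φ y - φ p)) hc.continuousAt hXc
    exact this.eventually_ne (by rw [hXn]; exact hx)
  have ev2 : ∀ᶠ m in 𝓝 n, 𝔹 (q' - p) m ≠ 0 := by
    have hc : Continuous fun m : Fin 4 → ℝ => 𝔹 (q' - p) m := by fun_prop
    exact hc.continuousAt.eventually_ne hqn0
  filter_upwards [ev1, ev2] with m h1 h2 hm
  have hmeet := null_line_meet hm h2
  have e2 : φ (p + T m • m) = φ q' := by
    refine h.eq_of_cone (c := φ p) (x := X m) ?_ ?_ ?_ (h.null_img p hm _) ?_ h1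
    · rw [bil_sub_swap]; exact hmeet
    · have : X m - (p + T m • m) = (1 - (s - 1) / s) • (q' - (p + T m • m)) := by
        simp only [hX]; module
      rw [this, bil_smul_left, bil_smul_right]
      simp only [hT]; rw [hmeet]; simp
    · have : X m - q' = (-((s - 1) / s)) • (q' - (p + T m • m)) := by
        simp only [hX]; module
      rw [this, bil_smul_left, bil_smul_right]
      simp only [hT]; rw [hmeet]; simp
    · rw [he]; exact h.pres _ _ hq'
  intro a b
  refine orth_trans (sub_ne_zero.2 hne) (h.null_img p hn t) (h.null_img p hn a)
    (h.sameDir_refl p hn t a) ?_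
  rw [e1, ← e2]
  exact h.sameDir_refl p hm (T m) b

/-- Local constancy made global: the null directions `m` with `𝔹 m (q - p) > 0` form a connected
set, a retract of a half-space. -/
lemma NonDeg.sameDir_of_pos {φ : (Fin 4 → ℝ) → (Fin 4 → ℝ)} (h : NonDeg φ)
    {p q n m : Fin 4 → ℝ} (he : φ p = φ q) (hpq : 𝔹 (p - q) (p - q) = 0) (hn : 𝔹 n n = 0)
    (hm : 𝔹 m m = 0) (hB : 0 < 𝔹 n (q - p)) (hB' : 0 < 𝔹 m (q - p)) : SameDir φ p n m := by
  set o := q - p with ho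
  have hoo : 𝔹 o o = 0 := by rw [ho, bil_sub_swap]; exact hpq
  set v : ℝ → (Fin 4 → ℝ) := fun τ => n + τ • (m - n) with hv
  have hvpos : ∀ τ ∈ Set.Icc (0 : ℝ) 1, 0 < 𝔹 (v τ) o := by
    intro τ hτ
    simp only [hv]
    rw [bil_add_left, bil_smul_left, bil_sub_left]
    rcases eq_or_lt_of_le hτ.1 with h0 | h0
    · rw [← h0]; linarith
    · nlinarith [mul_pos h0 hB', mul_nonneg (sub_nonneg.2 hτ.2) hB.le]
  set g : ℝ → (Fin 4 → ℝ) := fun τ => v τ - (𝔹 (v τ) (v τ) / (2 * 𝔹 (v τ) o)) • o with hg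
  have hgnull : ∀ τ ∈ Set.Icc (0 : ℝ) 1, 𝔹 (g τ) (g τ) = 0 := by
    intro τ hτ
    have := null_line_meet (p := 0) (x := v τ) hoo (by simpa using (hvpos τ hτ).ne')
    simpa [hg] using this
  have hgpos : ∀ τ ∈ Set.Icc (0 : ℝ) 1, 0 < 𝔹 (g τ) o := by
    intro τ hτ
    simp only [hg]
    rw [bil_sub_left, bil_smul_left, hoo]
    simpa using hvpos τ hτ
  have hvc : Continuous v := by simp only [hv]; fun_prop
  have hgc : ContinuousOn g (Set.Icc 0 1) := by
    have h1 : Continuous fun τ => 𝔹 (v τ) (v τ) := by fun_prop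
    have h2 : Continuous fun τ => 2 * 𝔹 (v τ) o := by fun_prop
    have h3 : ContinuousOn (fun τ => 𝔹 (v τ) (v τ) / (2 * 𝔹 (v τ) o)) (Set.Icc 0 1) :=
      h1.continuousOn.div h2.continuousOn fun τ hτ => by have := hvpos τ hτ; positivity
    exact hvc.continuousOn.sub (h3.smul continuousOn_const)
  have hne0 : ∀ τ ∈ Set.Icc (0 : ℝ) 1, g τ ≠ 0 := by
    intro τ hτ h0
    have := hgpos τ hτ
    rw [h0, bil_zero_left] at this
    exact lt_irrefl _ this
  have key : SameDir φ p (g 0) (g 1) := by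
    refine (isPreconnected_Icc (a := (0 : ℝ)) (b := 1)).induction₂
      (fun a b => SameDir φ p (g a) (g b)) ?_ ?_ ?_ (by simp) (by simp)
    · intro x hx
      have := (hgc x hx).eventually
        (h.sameDir_eventually he hpq (hgnull x hx) (hgpos x hx).ne')
      filter_upwards [this, self_mem_nhdsWithin] with y hy hy2
      exact hy (hgnull y hy2)
    · intro x y z hx hy hz h1 h2
      exact h.sameDir_trans (hgnull x hx) (hgnull y hy) (hne0 y hy) h1 h2
    · intro x y _ _ h1
      exact h1.symm
  have g0 : g 0 = n := by simp [hg, hv, hn]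
  have g1 : g 1 = m := by simp [hg, hv, hm]
  rwa [g0, g1] at key

lemma bil_neg_left (x y : Fin 4 → ℝ) : 𝔹 (-x) y = -𝔹 x y := by
  simp only [lorentzMink, Pi.neg_apply]; ring

lemma bil_neg_right (x y : Fin 4 → ℝ) : 𝔹 x (-y) = -𝔹 x y := by
  simp only [lorentzMink, Pi.neg_apply]; ring

lemma NonDeg.sameDir {φ : (Fin 4 → ℝ) → (Fin 4 → ℝ)} (h : NonDeg φ)
    {p q n m : Fin 4 → ℝ} (he : φ p = φ q) (hpq : 𝔹 (p - q) (p - q) = 0) (hn : 𝔹 n n = 0)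
    (hm : 𝔹 m m = 0) (hB : 𝔹 n (q - p) ≠ 0) (hB' : 𝔹 m (q - p) ≠ 0) : SameDir φ p n m := by
  have hn' : 𝔹 (-n) (-n) = 0 := by rw [bil_neg_left, bil_neg_right]; simpa using hn
  have hm' : 𝔹 (-m) (-m) = 0 := by rw [bil_neg_left, bil_neg_right]; simpa using hm
  rcases lt_or_gt_of_ne hB with h1 | h1 <;> rcases lt_or_gt_of_ne hB' with h2 | h2
  · have := h.sameDir_of_pos he hpq hn' hm' (by rw [bil_neg_left]; linarith)
      (by rw [bil_neg_left]; linarith)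
    simpa using this.neg_left.symm.neg_left.symm
  · have := h.sameDir_of_pos he hpq hn' hm (by rw [bil_neg_left]; linarith) h2
    simpa using this.neg_left
  · have := h.sameDir_of_pos he hpq hn hm' h1 (by rw [bil_neg_left]; linarith)
    simpa using this.symm.neg_left.symm
  · exact h.sameDir_of_pos he hpq hn hm h1 h2

/-- Every neighbourhood of a nonzero null vector contains null vectors not parallel to it. -/
lemma exists_null_near {k : Fin 4 → ℝ} (hk : 𝔹 k k = 0) (hk0 : k ≠ 0) {P : (Fin 4 → ℝ) → Prop}
    (hP : ∀ᶠ m in 𝓝 k, P m) : ∃ m, 𝔹 m m = 0 ∧ 𝔹 m k ≠ 0 ∧ P m := by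
  have h3 := three_ne_zero_of_null hk hk0
  -- `o` is the reflection of `k` in the time axis
  set o : Fin 4 → ℝ := ![-k 0, -k 1, -k 2, k 3] with ho
  have hoo : 𝔹 o o = 0 := by simp [lorentzMink, ho] at hk ⊢; linarith
  have hko : 𝔹 k o ≠ 0 := by
    have : 𝔹 k o = 2 * k 3 ^ 2 := by simp [lorentzMink, ho] at hk ⊢; linarith
    rw [this]; positivity
  obtain ⟨w, hwo, hww⟩ : ∃ w, 𝔹 w o = 0 ∧ 𝔹 w w ≠ 0 := by
    by_cases h0 : k 0 ^ 2 = k 3 ^ 2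
    · refine ⟨![0, k 3, 0, -k 1], by simp [lorentzMink, ho]; ring, ?_⟩
      have hk1 : k 1 = 0 := by
        simp only [lorentzMink] at hk; nlinarith [sq_nonneg (k 1), sq_nonneg (k 2)]
      simp [lorentzMink, hk1, h3]
    · refine ⟨![k 3, 0, 0, -k 0], by simp [lorentzMink, ho]; ring, ?_⟩
      intro h1
      apply h0
      simp [lorentzMink] at h1; linarith
  set g : ℝ → (Fin 4 → ℝ) :=
    fun ε => k + ε • w - (𝔹 (k + ε • w) (k + ε • w) / (2 * 𝔹 k o)) • o with hg
  have hgc : Continuous g := by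
    simp only [hg]
    have : Continuous fun ε : ℝ => 𝔹 (k + ε • w) (k + ε • w) := by fun_prop
    fun_prop
  have hg0 : g 0 = k := by simp [hg, hk]
  have hB : ∀ ε : ℝ, 𝔹 (k + ε • w) o = 𝔹 k o := by
    intro ε; rw [bil_add_left, bil_smul_left, hwo]; ring
  have hgn : ∀ ε : ℝ, 𝔹 (g ε) (g ε) = 0 := by
    intro ε
    have := null_line_meet (p := 0) (x := k + ε • w) hoo (by simpa [hB] using hko)
    simpa [hg, hB] using this
  have hgk : ∀ ε : ℝ, 𝔹 (g ε) k = -(ε ^ 2 * 𝔹 w w) / 2 := by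
    intro ε
    simp only [hg]
    rw [bil_sub_left, bil_smul_left, bil_comm o k]
    have h1 : 𝔹 (k + ε • w) (k + ε • w) = 2 * ε * 𝔹 w k + ε ^ 2 * 𝔹 w w := by
      simp only [bil_add_left, bil_add_right, bil_smul_left, bil_smul_right]
      rw [hk, bil_comm k w]; ring
    rw [h1, bil_add_left, bil_smul_left, hk]
    field_simp; ring
  have ev : ∀ᶠ ε in 𝓝 (0 : ℝ), P (g ε) := by
    have : Tendsto g (𝓝 0) (𝓝 k) := by simpa [hg0] using hgc.tendsto 0
    exact this.eventually hP
  obtain ⟨ε, h1, h2⟩ := ((ev.filter_mono nhdsWithin_le_nhds).and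
    (self_mem_nhdsWithin (a := (0 : ℝ)) (s := {0}ᶜ))).exists
  refine ⟨g ε, hgn ε, ?_, h1⟩
  rw [hgk]
  have : ε ≠ 0 := h2
  have : ε ^ 2 * 𝔹 w w ≠ 0 := mul_ne_zero (pow_ne_zero _ this) hww
  simpa using this

/-- A nondegenerate coherency preserver is injective on null lines. If `φ p = φ q`, a transversal
yields `p'`, `q'` with `φ p' = φ q'` as well, so by `NonDeg.sameDir` the null lines through `p'`
near the transversal are mapped into the image line of `p + ℝ n`, which lies in the cone of `φ p`.
This contradicts the choice of the transversal. -/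
lemma NonDeg.injective_of_coherent {φ : (Fin 4 → ℝ) → (Fin 4 → ℝ)} (h : NonDeg φ)
    {p q : Fin 4 → ℝ} (hpq : 𝔹 (p - q) (p - q) = 0) (he : φ p = φ q) : p = q := by
  by_contra hne
  have hφ := h.cont
  obtain ⟨n, hn, hB, -⟩ := exists_null_near (k := q - p) (by rw [bil_sub_swap]; exact hpq)
    (sub_ne_zero.2 (Ne.symm hne)) (P := fun _ => True) (by simp)
  obtain ⟨t, s, k, hk, ht, hs, hnk, hq', hx⟩ := h.exists_transversal hpq hn hB
  have hk0 : k ≠ 0 := by rintro rfl; simp [lorentzMink] at hnk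
  set p' := p + t • n with hp'
  set q' := p' + s • k with hq'def
  have hPQ : 𝔹 (p' - q') (p' - q') = 0 := by
    have : p' - q' = (-s) • k := by rw [hq'def]; module
    rw [this, bil_smul_left, bil_smul_right, hk]; simp
  have e1 : φ p' = φ q' := by
    refine h.eq_of_cone (c := φ p) (x := p' + k) hPQ ?_ ?_ (h.null_img p hn t) ?_ hx
    · rw [add_sub_cancel_left]; exact hk
    · have : p' + k - q' = (1 - s) • k := by rw [hq'def]; module
      rw [this, bil_smul_left, bil_smul_right, hk]; simp
    · rw [he]; exact h.pres _ _ hq'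
  have hQP : q' - p' = s • k := by rw [hq'def]; module
  obtain ⟨m, hm, hmk, hmx⟩ := exists_null_near hk hk0
    (P := fun m => 𝔹 (φ (p' + m) - φ p) (φ (p' + m) - φ p) ≠ 0) (by
      have hc : Continuous fun m => 𝔹 (φ (p' + m) - φ p) (φ (p' + m) - φ p) := by fun_prop
      exact hc.continuousAt.eventually_ne hx)
  have hS := h.sameDir e1 hPQ hn hm (by rw [hQP, bil_smul_right]; exact mul_ne_zero hs hnk)
    (by rw [hQP, bil_smul_right]; exact mul_ne_zero hs hmk) (-t) 1
  have hpp : p' + (-t) • n = p := by rw [hp']; module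
  rw [hpp, one_smul] at hS
  apply hmx
  have h1 := h.null_img p' hm 1
  rw [one_smul] at h1
  have h2 := h.null_img p hn t
  rw [← hp'] at h2
  simp only [lorentzMink, Pi.sub_apply] at *
  linarith

/-! ### Injectivity and preservation of coherency in both directions -/

/-- A basis of `ℝ⁴` of null vectors. -/
def nullA : Fin 4 → Fin 4 → ℝ := ![![1, 0, 0, 1], ![-1, 0, 0, 1], ![0, 1, 0, 1], ![0, 0, 1, 1]]

/-- A basis of `ℝ⁴` of null vectors, none parallel to a vector of `nullA`. -/
def nullB : Fin 4 → Fin 4 → ℝ := ![![0, -1, 0, 1], ![0, 0, -1, 1], ![3, 4, 0, 5], ![-3, 4, 0, 5]]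

lemma nullA_null (i : Fin 4) : 𝔹 (nullA i) (nullA i) = 0 := by
  fin_cases i <;> simp [nullA, lorentzMink]

lemma nullB_null (i : Fin 4) : 𝔹 (nullB i) (nullB i) = 0 := by
  fin_cases i <;> simp [nullB, lorentzMink] <;> norm_num

lemma nullA_nullA {i j : Fin 4} (h : i ≠ j) : 𝔹 (nullA i) (nullA j) ≠ 0 := by
  fin_cases i <;> fin_cases j <;> simp [nullA, lorentzMink] at h ⊢

lemma nullA_nullB (i j : Fin 4) : 𝔹 (nullA i) (nullB j) ≠ 0 := by
  fin_cases i <;> fin_cases j <;> simp [nullA, nullB, lorentzMink] <;> norm_num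

lemma nullA_ne_zero (i : Fin 4) : nullA i ≠ 0 := by
  intro h
  have := nullA_nullB i 0
  rw [h, bil_zero_left] at this
  exact this rfl

lemma nullB_ne_zero (i : Fin 4) : nullB i ≠ 0 := by
  intro h
  have := nullA_nullB 0 i
  rw [h, bil_comm, bil_zero_left] at this
  exact this rfl

lemma nullA_span {w : Fin 4 → ℝ} (hw : w ≠ 0) : ∃ i, 𝔹 w (nullA i) ≠ 0 := by
  by_contra! h
  have h0 := h 0
  have h1 := h 1
  have h2 := h 2
  have h3 := h 3
  simp [nullA, lorentzMink] at h0 h1 h2 h3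
  apply hw
  ext i
  fin_cases i <;> simp <;> linarith

lemma nullB_span {w : Fin 4 → ℝ} (hw : w ≠ 0) : ∃ i, 𝔹 w (nullB i) ≠ 0 := by
  by_contra! h
  have h0 := h 0
  have h1 := h 1
  have h2 := h 2
  have h3 := h 3
  simp [nullB, lorentzMink] at h0 h1 h2 h3
  apply hw
  ext i
  fin_cases i <;> simp <;> linarith

/-- If `φ y = φ z = c` with `y ≠ z`, a generic null line meets the cones of `y` and `z` in distinct
points, whose images are distinct points of the cone of `c`; so generic points are mapped into that
cone. -/
lemma NonDeg.injective {φ : (Fin 4 → ℝ) → (Fin 4 → ℝ)} (h : NonDeg φ) :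
    Function.Injective φ := by
  intro y z he
  by_contra hne
  set w : Fin 4 → ℝ := ![(y - z) 0, (y - z) 1, (y - z) 2, -(y - z) 3] with hw
  have hw0 : w ≠ 0 := by
    intro h0
    apply hne
    have h1 : ∀ i, w i = 0 := fun i => by rw [h0]; rfl
    have a0 := h1 0
    have a1 := h1 1
    have a2 := h1 2
    have a3 := h1 3
    simp [hw] at a0 a1 a2 a3
    ext i
    fin_cases i <;> simp <;> linarith
  obtain ⟨i, hi⟩ := nullA_span hw0
  have hn := nullA_null i
  have h3 := three_ne_zero_of_null hn (nullA_ne_zero i)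
  generalize nullA i = n at *
  have hwn : 𝔹 w n = 𝔹 (y - z) n - 2 * (y - z) 3 * n 3 := by
    simp [hw, lorentzMink]; ring
  obtain ⟨x, hx, hP1, hP2, hP3⟩ := h.exists_generic (φ y) (fun x => 𝔹 (x - y) n ≠ 0 ∧
      𝔹 (x - z) n ≠ 0 ∧
      𝔹 (x - y) (x - y) * 𝔹 (x - z) n - 𝔹 (x - z) (x - z) * 𝔹 (x - y) n ≠ 0) (by
    intro x
    filter_upwards [eventually_cubic_ne (𝔹 (x - y) n) (n 3) 0 0 (Or.inl h3),
      eventually_cubic_ne (𝔹 (x - z) n) (n 3) 0 0 (Or.inl h3),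
      eventually_cubic_ne
        (𝔹 (x - y) (x - y) * 𝔹 (x - z) n - 𝔹 (x - z) (x - z) * 𝔹 (x - y) n)
        (2 * (x - y) 3 * 𝔹 (x - z) n + 𝔹 (x - y) (x - y) * n 3
          - 2 * (x - z) 3 * 𝔹 (x - y) n - 𝔹 (x - z) (x - z) * n 3)
        (𝔹 w n) 0 (Or.inr (Or.inl hi))] with ε h1 h2 h3
    refine ⟨?_, ?_, ?_⟩
    · rw [bil_shift]; simpa using h1
    · rw [bil_shift]; simpa using h2
    · rw [bil_shift_self, bil_shift_self, bil_shift, bil_shift]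
      convert h3 using 1
      rw [hwn]
      simp only [bil_sub_left, Pi.sub_apply]
      ring)
  -- the points of the line `x + ℝ n` coherent to `y` and to `z`
  have m1 := null_line_meet (p := x) (x := y) (n := n) hn (by
    intro h0; apply hP1
    simp only [bil_sub_left] at h0 ⊢; linarith)
  have m2 := null_line_meet (p := x) (x := z) (n := n) hn (by
    intro h0; apply hP2
    simp only [bil_sub_left] at h0 ⊢; linarith)
  set t₁ := 𝔹 (y - x) (y - x) / (2 * 𝔹 (y - x) n) with ht₁
  set t₂ := 𝔹 (z - x) (z - x) / (2 * 𝔹 (z - x) n) with ht₂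
  have hc : 𝔹 (x + t₁ • n - (x + t₂ • n)) (x + t₁ • n - (x + t₂ • n)) = 0 := by
    rw [add_sub_add_left_eq_sub, ← sub_smul, bil_smul_left, bil_smul_right, hn]; simp
  have heq : φ (x + t₁ • n) = φ (x + t₂ • n) := by
    refine h.eq_of_cone (c := φ y) (x := x) hc ?_ ?_ ?_ ?_ hx
    · rw [sub_add_cancel_left, bil_neg_left, bil_neg_right, bil_smul_left, bil_smul_right, hn]; simp
    · rw [sub_add_cancel_left, bil_neg_left, bil_neg_right, bil_smul_left, bil_smul_right, hn]; simp
    · rw [bil_sub_swap]; exact h.pres _ _ m1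
    · rw [he, bil_sub_swap]; exact h.pres _ _ m2
  have hxx := h.injective_of_coherent hc heq
  have ht : t₁ = t₂ := by
    have := congrFun hxx 3
    simpa [h3] using this
  apply hP3
  have n1 : 𝔹 (y - x) n = -𝔹 (x - y) n := by simp only [bil_sub_left]; ring
  have n2 : 𝔹 (z - x) n = -𝔹 (x - z) n := by simp only [bil_sub_left]; ring
  rw [ht₁, ht₂, n1, n2, bil_sub_swap y, bil_sub_swap z] at ht
  field_simp at ht
  linarith

/-- If `φ y`, `φ z` are coherent but `y`, `z` are not, the generators of the cone of `y` through
points coherent to `z` are all mapped into the line through `φ y` and `φ z`; two of them overlap near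
`φ y`, against injectivity. -/
lemma NonDeg.coherent_of_image {φ : (Fin 4 → ℝ) → (Fin 4 → ℝ)} (h : NonDeg φ)
    {y z : Fin 4 → ℝ} (hyz : 𝔹 (φ y - φ z) (φ y - φ z) = 0) : 𝔹 (y - z) (y - z) = 0 := by
  by_contra hQ
  have hφ := h.cont
  have hw : z - y ≠ 0 := by
    intro h0; apply hQ; rw [bil_sub_swap, h0, bil_zero_left]
  set c := φ z - φ y with hc
  have hc0 : c ≠ 0 := by
    rw [hc, sub_ne_zero]; intro h0; exact hw (sub_eq_zero.2 (h.injective h0))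
  have hcc : 𝔹 c c = 0 := by rw [hc, bil_sub_swap]; exact hyz
  have hline : ∀ n, 𝔹 n n = 0 → 𝔹 (z - y) n ≠ 0 → ∀ t : ℝ,
      φ (y + t • n) - φ y = ((φ (y + t • n) - φ y) 3 / c 3) • c := by
    intro n hn hB t
    refine parallel_of_null hcc (h.null_img y hn t) ?_ hc0
    have m1 := null_line_meet hn hB
    set r := 𝔹 (z - y) (z - y) / (2 * 𝔹 (z - y) n) with hr
    have hr0 : r ≠ 0 := by
      rw [hr]
      refine div_ne_zero ?_ (by positivity)
      rw [bil_sub_swap]; exact hQ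
    have hne : φ (y + r • n) - φ y ≠ 0 := by
      rw [sub_ne_zero]
      intro h0
      have h1 := h.injective h0
      rw [add_eq_left, smul_eq_zero] at h1
      rcases h1 with h1 | h1
      · exact hr0 h1
      · rw [h1, bil_comm, bil_zero_left] at hB; exact hB rfl
    refine orth_trans hne (h.null_img y hn r) hcc ?_ (h.sameDir_refl y hn r t)
    refine orth_of_null (h.null_img y hn r) hcc ?_
    rw [hc, sub_sub_sub_cancel_right, bil_sub_swap]
    exact h.pres _ _ m1
  have hc3 := three_ne_zero_of_null hcc hc0
  have hmono : ∀ n, 𝔹 n n = 0 → 𝔹 (z - y) n ≠ 0 → ∃ δ > 0, ∀ v : ℝ, 0 < v → v < δ →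
      ∃ t : ℝ, t ≠ 0 ∧ (φ (y + t • n) - φ y) 3 = v := by
    intro n hn hB
    have hn0 : n ≠ 0 := by rintro rfl; rw [bil_comm, bil_zero_left] at hB; exact hB rfl
    set a : ℝ → ℝ := fun t => (φ (y + t • n) - φ y) 3 with ha
    have hac : Continuous a := by
      have : Continuous fun t : ℝ => φ (y + t • n) - φ y := by fun_prop
      exact (continuous_apply 3).comp this
    have ha0 : a 0 = 0 := by simp [ha]
    have hinj : Function.Injective a := by
      intro s t hst
      have h1 := hline n hn hB s
      have h2 := hline n hn hB t
      simp only [ha] at hst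
      rw [hst, ← h2] at h1
      have h3 := h.injective (sub_left_injective h1)
      rw [add_right_inj] at h3
      exact smul_left_injective ℝ hn0 h3
    have hex : ∃ r : ℝ, 0 < a r := by
      rcases hac.strictMono_of_inj hinj with hm | hm
      · exact ⟨1, by rw [← ha0]; exact hm one_pos⟩
      · exact ⟨-1, by rw [← ha0]; exact hm (by norm_num)⟩
    obtain ⟨r, hr⟩ := hex
    refine ⟨a r, hr, fun v hv hvr => ?_⟩
    obtain ⟨t, ht⟩ := mem_range_of_exists_le_of_exists_ge hac ⟨0, by rw [ha0]; exact hv.le⟩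
      ⟨r, hvr.le⟩
    refine ⟨t, ?_, ht⟩
    rintro rfl
    rw [ha0] at ht
    exact hv.ne ht
  obtain ⟨i, hi⟩ := nullA_span hw
  obtain ⟨j, hj⟩ := nullB_span hw
  obtain ⟨δ₁, hδ₁, H₁⟩ := hmono _ (nullA_null i) hi
  obtain ⟨δ₂, hδ₂, H₂⟩ := hmono _ (nullB_null j) hj
  have hv : 0 < min δ₁ δ₂ := lt_min hδ₁ hδ₂
  obtain ⟨t, ht, e1⟩ := H₁ (min δ₁ δ₂ / 2) (by positivity) (by linarith [min_le_left δ₁ δ₂])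
  obtain ⟨s, hs, e2⟩ := H₂ (min δ₁ δ₂ / 2) (by positivity) (by linarith [min_le_right δ₁ δ₂])
  have h1 := hline _ (nullA_null i) hi t
  have h2 := hline _ (nullB_null j) hj s
  rw [e1] at h1
  rw [e2, ← h1] at h2
  have h3 := h.injective (sub_left_injective h2)
  rw [add_right_inj] at h3
  have h4 : 𝔹 (s • nullB j) (t • nullA i) = 0 := by
    rw [h3, bil_smul_left, bil_smul_right, nullA_null]; simp
  rw [bil_smul_left, bil_smul_right, bil_comm] at h4
  exact mul_ne_zero hs (mul_ne_zero ht (nullA_nullB i j)) h4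

/-- A continuous injective map preserving coherency in both directions. -/
structure Rigid (φ : (Fin 4 → ℝ) → (Fin 4 → ℝ)) : Prop where
  cont : Continuous φ
  inj : Function.Injective φ
  coh : ∀ x y, 𝔹 (φ x - φ y) (φ x - φ y) = 0 ↔ 𝔹 (x - y) (x - y) = 0

lemma NonDeg.rigid {φ : (Fin 4 → ℝ) → (Fin 4 → ℝ)} (h : NonDeg φ) : Rigid φ :=
  ⟨h.cont, h.injective, fun x y => ⟨h.coherent_of_image, h.pres x y⟩⟩

lemma Rigid.translate {φ : (Fin 4 → ℝ) → (Fin 4 → ℝ)} (h : Rigid φ) (p : Fin 4 → ℝ) :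
    Rigid fun x => φ (p + x) - φ p := by
  have hφ := h.cont
  refine ⟨by fun_prop, fun x y hxy => ?_, fun x y => ?_⟩
  · exact add_left_cancel (h.inj (sub_left_injective hxy))
  · rw [sub_sub_sub_cancel_right, h.coh, add_sub_add_left_eq_sub]

/-! ### Functions of one real variable -/

/-- Maximum principle: a continuous function on `[a, b]` that agrees locally with its symmetric
averages and vanishes at the ends is nonpositive; consider the leftmost point of maximum. -/
lemma nonpos_of_local_midpoint {G : ℝ → ℝ} {a b : ℝ} (hab : a ≤ b) (hc : ContinuousOn G (Set.Icc a b))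
    (hm : ∀ u ∈ Set.Ioo a b, ∀ᶠ δ in 𝓝 (0 : ℝ), G (u + δ) + G (u - δ) = 2 * G u)
    (ha : G a = 0) (hb : G b = 0) : ∀ u ∈ Set.Icc a b, G u ≤ 0 := by
  obtain ⟨m, hmI, hmax⟩ := isCompact_Icc.exists_isMaxOn (Set.nonempty_Icc.2 hab) hc
  by_contra! hcon
  obtain ⟨x, hx, hpos⟩ := hcon
  have hmpos : 0 < G m := hpos.trans_le (hmax hx)
  set S := Set.Icc a b ∩ G ⁻¹' {G m} with hS
  have hScl : IsCompact S :=
    isCompact_Icc.of_isClosed_subset (hc.preimage_isClosed_of_isClosed isClosed_Icc isClosed_singleton)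
      Set.inter_subset_left
  obtain ⟨l, ⟨hlI, hlm⟩, hleast⟩ := hScl.exists_isLeast ⟨m, hmI, rfl⟩
  simp only [Set.mem_preimage, Set.mem_singleton_iff] at hlm
  have hla : a < l := lt_of_le_of_ne hlI.1 (by rintro rfl; linarith)
  have hlb : l < b := lt_of_le_of_ne hlI.2 (by rintro rfl; linarith)
  have e1 := (hm l ⟨hla, hlb⟩).filter_mono (nhdsWithin_le_nhds (s := Set.Ioi 0))
  have e2 : ∀ᶠ δ in 𝓝[>] (0 : ℝ), δ < l - a :=
    (eventually_lt_nhds (sub_pos.2 hla)).filter_mono nhdsWithin_le_nhds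
  have e3 : ∀ᶠ δ in 𝓝[>] (0 : ℝ), δ < b - l :=
    (eventually_lt_nhds (sub_pos.2 hlb)).filter_mono nhdsWithin_le_nhds
  obtain ⟨δ, ⟨⟨h1, h2⟩, h3⟩, h4⟩ := (((e1.and e2).and e3).and self_mem_nhdsWithin).exists
  have h4 : 0 < δ := h4
  have m1 : l + δ ∈ Set.Icc a b := ⟨by linarith, by linarith⟩
  have m2 : l - δ ∈ Set.Icc a b := ⟨by linarith, by linarith⟩
  have n1 : G (l + δ) ≤ G m := hmax m1
  have n2 : G (l - δ) ≤ G m := hmax m2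
  have n3 : G (l - δ) = G m := by linarith
  have := hleast ⟨m2, n3⟩
  linarith

lemma affine_Icc_of_local_midpoint {g : ℝ → ℝ} {a b : ℝ} (hab : a < b)
    (hc : ContinuousOn g (Set.Icc a b))
    (hm : ∀ u ∈ Set.Ioo a b, ∀ᶠ δ in 𝓝 (0 : ℝ), g (u + δ) + g (u - δ) = 2 * g u) :
    ∀ u ∈ Set.Icc a b, g u = g a + (g b - g a) / (b - a) * (u - a) := by
  have hba : b - a ≠ 0 := (sub_pos.2 hab).ne'
  intro u hu
  have h1 := nonpos_of_local_midpoint (G := fun u => g u - (g a + (g b - g a) / (b - a) * (u - a)))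
    hab.le (hc.sub (by fun_prop)) (fun v hv => by
      filter_upwards [hm v hv] with δ hδ
      linear_combination hδ) (by simp) (by field_simp; ring) u hu
  have h2 := nonpos_of_local_midpoint (G := fun u => (g a + (g b - g a) / (b - a) * (u - a)) - g u)
    hab.le (ContinuousOn.sub (by fun_prop) hc) (fun v hv => by
      filter_upwards [hm v hv] with δ hδ
      linear_combination -hδ) (by simp) (by field_simp; ring) u hu
  linarith

lemma affine_of_local_midpoint {g : ℝ → ℝ} (hc : ContinuousOn g (Set.Ioi 0))
    (hm : ∀ u : ℝ, 0 < u → ∀ᶠ δ in 𝓝 (0 : ℝ), g (u + δ) + g (u - δ) = 2 * g u) :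
    ∃ α β : ℝ, ∀ u : ℝ, 0 < u → g u = α * u + β := by
  refine ⟨g 2 - g 1, 2 * g 1 - g 2, fun u hu => ?_⟩
  set a := min u 1 with ha
  set b := max u 2 with hb
  have ha0 : 0 < a := lt_min hu one_pos
  have a1 : a ≤ 1 := min_le_right _ _
  have a2 : a ≤ u := min_le_left _ _
  have b1 : 2 ≤ b := le_max_right _ _
  have b2 : u ≤ b := le_max_left _ _
  have H := affine_Icc_of_local_midpoint (a := a) (b := b) (by linarith)
    (hc.mono fun x hx => ha0.trans_le hx.1) (fun v hv => hm v (ha0.trans hv.1))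
  have e1 := H 1 ⟨a1, by linarith⟩
  have e2 := H 2 ⟨by linarith, b1⟩
  have e3 := H u ⟨a2, b2⟩
  rw [e1, e2, e3]
  ring

/-- A quadratic polynomial vanishing on the positive half-line vanishes identically. -/
lemma quadratic_eq_zero {a b c : ℝ} (h : ∀ t : ℝ, 0 < t → a + b * t + c * t ^ 2 = 0) (t : ℝ) :
    a + b * t + c * t ^ 2 = 0 := by
  have h1 := h 1 one_pos
  have h2 := h 2 two_pos
  have h3 := h 3 three_pos
  have hc : c = 0 := by linarith
  have hb : b = 0 := by linarith
  have ha : a = 0 := by linarith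
  simp [ha, hb, hc]

/-- If the increments of an injective `F` to the right of each point are fractional linear, then `F` is
affine: a pole to the left of `t₀` would be a pole to the right of another base point. -/
lemma affine_of_fractional {F : ℝ → ℝ} (hF : Function.Injective F)
    (H : ∀ t₀ : ℝ, ∃ α β : ℝ, ∀ t : ℝ, 0 < t → (F (t₀ + t) - F t₀) * (α + β * t) = t) (t : ℝ) :
    F t = F 0 + t * (F 1 - F 0) := by
  have pole : ∀ t₀ α β : ℝ, (∀ t : ℝ, 0 < t → (F (t₀ + t) - F t₀) * (α + β * t) = t) →
      β ≠ 0 → 0 < α / β := by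
    intro t₀ α β h hβ
    rcases lt_trichotomy (α / β) 0 with h1 | h1 | h1
    · have h2 := h (-(α / β)) (by linarith)
      have h3 : α + β * -(α / β) = 0 := by field_simp; ring
      rw [h3] at h2
      linarith
    · have hα : α = 0 := by
        rcases div_eq_zero_iff.1 h1 with h | h
        · exact h
        · exact absurd h hβ
      have e1 := h 1 one_pos
      have e2 := h 2 two_pos
      rw [hα] at e1 e2
      have e3 : (F (t₀ + 1) - F (t₀ + 2)) * β = 0 := by linarith
      rcases mul_eq_zero.1 e3 with e | e
      · have := hF (sub_eq_zero.1 e); linarith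
      · exact absurd e hβ
    · exact h1
  have lin : ∀ t₀ α β : ℝ, (∀ t : ℝ, 0 < t → (F (t₀ + t) - F t₀) * (α + β * t) = t) → β = 0 := by
    intro t₀ α β h
    by_contra hβ
    set r := α / β with hr
    have hr0 : 0 < r := pole t₀ α β h hβ
    have hα : α = r * β := by rw [hr]; field_simp
    obtain ⟨α', β', h'⟩ := H (t₀ - r - 1)
    set d := F t₀ - F (t₀ - r - 1) with hd
    -- `t` and `t + r + 1` are the same point seen from `t₀` and from `t₀ - r - 1`.
    have key : ∀ t : ℝ, 0 < t →
        (t + d * (α + β * t)) * (α' + β' * (t + r + 1)) - (t + r + 1) * (α + β * t) = 0 := by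
      intro t ht
      have e1 := h t ht
      have e2 := h' (t + r + 1) (by linarith)
      have e3 : t₀ - r - 1 + (t + r + 1) = t₀ + t := by ring
      rw [e3] at e2
      have e4 : F (t₀ + t) - F (t₀ - r - 1) = F (t₀ + t) - F t₀ + d := by rw [hd]; ring
      rw [e4] at e2
      linear_combination (α + β * t) * e2 - (α' + β' * (t + r + 1)) * e1
    have q := quadratic_eq_zero
      (a := d * α * (α' + β' * (r + 1)) - (r + 1) * α)
      (b := (1 + d * β) * (α' + β' * (r + 1)) + d * α * β' - (r + 1) * β - α)
      (c := (1 + d * β) * β' - β) (fun t ht => by linear_combination key t ht)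
    have e1 := q (-r)
    have e2 : -r * (α' + β' * 1) = 0 := by
      rw [hα] at e1
      linear_combination e1
    have e3 := h' 1 one_pos
    rcases mul_eq_zero.1 e2 with e | e
    · linarith
    · rw [e] at e3; linarith
  have step : ∀ t₀ t : ℝ, 0 < t → F (t₀ + t) - F t₀ = t * (F (t₀ + 1) - F t₀) := by
    intro t₀ t ht
    obtain ⟨α, β, h⟩ := H t₀
    have hβ := lin t₀ α β h
    subst hβ
    have e1 := h 1 one_pos
    have e2 := h t ht
    have hα : α ≠ 0 := by rintro rfl; linarith
    apply mul_right_cancel₀ hα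
    linear_combination e2 - t * e1
  rcases lt_trichotomy t 0 with ht | ht | ht
  · have e1 := step t (-t) (by linarith)
    have e2 := step t (1 - t) (by linarith)
    rw [add_neg_cancel] at e1
    rw [add_sub_cancel] at e2
    linear_combination (-1 + t) * e1 - t * e2
  · simp [ht]
  · have e1 := step 0 t ht
    simp only [zero_add] at e1
    linarith

/-! ### Conjugation by the inversion -/

/-- The coordinate `f` in `Φ (t • n) = f t • Φ n` along the null line spanned by `n`. -/
noncomputable def lineFun (Φ : (Fin 4 → ℝ) → (Fin 4 → ℝ)) (n : Fin 4 → ℝ) (t : ℝ) : ℝ :=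
  Φ (t • n) 3 / Φ n 3

/-- The map `Φ` conjugated by the inversion `x ↦ x / ⟨x, x⟩`. -/
noncomputable def invMap (Φ : (Fin 4 → ℝ) → (Fin 4 → ℝ)) (η : Fin 4 → ℝ) : Fin 4 → ℝ :=
  (𝔹 (Φ ((𝔹 η η)⁻¹ • η)) (Φ ((𝔹 η η)⁻¹ • η)))⁻¹ • Φ ((𝔹 η η)⁻¹ • η)

/-- The coordinate of `invMap` dual to the null direction `n`, as a function of that coordinate
of the argument; see `Rigid.invMap_bil`. -/
noncomputable def dualFun (Φ : (Fin 4 → ℝ) → (Fin 4 → ℝ)) (n : Fin 4 → ℝ) (u : ℝ) : ℝ :=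
  1 / (2 * lineFun Φ n (1 / (2 * u)))

lemma bil_sub_smul_self (c : ℝ) (x z : Fin 4 → ℝ) :
    𝔹 (x - c • z) (x - c • z) = 𝔹 x x - 2 * c * 𝔹 x z + c ^ 2 * 𝔹 z z := by
  simp only [lorentzMink, Pi.sub_apply, Pi.smul_apply, smul_eq_mul]; ring

section
variable {Φ : (Fin 4 → ℝ) → (Fin 4 → ℝ)} {n : Fin 4 → ℝ}

lemma Rigid.coh_zero (h : Rigid Φ) (h0 : Φ 0 = 0) (x : Fin 4 → ℝ) :
    𝔹 (Φ x) (Φ x) = 0 ↔ 𝔹 x x = 0 := by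
  simpa [h0] using h.coh x 0

lemma Rigid.ne_zero (h : Rigid Φ) (h0 : Φ 0 = 0) {x : Fin 4 → ℝ} (hx : x ≠ 0) : Φ x ≠ 0 :=
  fun e => hx (h.inj (e.trans h0.symm))

lemma Rigid.three_ne_zero (h : Rigid Φ) (h0 : Φ 0 = 0) (hn : 𝔹 n n = 0) (hn0 : n ≠ 0) :
    Φ n 3 ≠ 0 :=
  three_ne_zero_of_null ((h.coh_zero h0 n).2 hn) (h.ne_zero h0 hn0)

lemma Rigid.line_eq (h : Rigid Φ) (h0 : Φ 0 = 0) (hn : 𝔹 n n = 0) (hn0 : n ≠ 0) (t : ℝ) :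
    Φ (t • n) = lineFun Φ n t • Φ n := by
  have h1 : 𝔹 (t • n) (t • n) = 0 := by rw [bil_smul_left, bil_smul_right, hn]; simp
  have h2 : 𝔹 (n - t • n) (n - t • n) = 0 := by
    rw [bil_sub_left, bil_sub_right, bil_sub_right, bil_smul_left, bil_smul_right, hn, h1]; simp
  have a1 := (h.coh_zero h0 _).2 h1
  have a2 := (h.coh_zero h0 _).2 hn
  exact parallel_of_null a2 a1 (orth_of_null a2 a1 ((h.coh _ _).2 h2)) (h.ne_zero h0 hn0)

lemma Rigid.lineFun_cont (h : Rigid Φ) : Continuous (lineFun Φ n) := by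
  have hc := h.cont
  have : Continuous fun t : ℝ => Φ (t • n) := by fun_prop
  exact ((continuous_apply 3).comp this).div_const _

lemma Rigid.lineFun_inj (h : Rigid Φ) (h0 : Φ 0 = 0) (hn : 𝔹 n n = 0) (hn0 : n ≠ 0) :
    Function.Injective (lineFun Φ n) := by
  intro s t hst
  have h1 := h.line_eq h0 hn hn0 s
  rw [hst, ← h.line_eq h0 hn hn0 t] at h1
  exact smul_left_injective ℝ hn0 (h.inj h1)

lemma lineFun_zero (h0 : Φ 0 = 0) : lineFun Φ n 0 = 0 := by
  simp [lineFun, h0]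

lemma Rigid.lineFun_ne_zero (h : Rigid Φ) (h0 : Φ 0 = 0) (hn : 𝔹 n n = 0) (hn0 : n ≠ 0) {t : ℝ}
    (ht : t ≠ 0) : lineFun Φ n t ≠ 0 := by
  rw [← lineFun_zero (n := n) h0]
  exact fun e => ht (h.lineFun_inj h0 hn hn0 e)

/-- With `y = η / ⟨η, η⟩`, the point `y` lies on the cone of `t • n` for `t = 1 / (2 ⟨η, n⟩)`, hence
`Φ y` lies on the cone of `Φ (t • n)`; this determines `⟨Φ y, Φ n⟩ / ⟨Φ y, Φ y⟩`. -/
lemma Rigid.invMap_bil (h : Rigid Φ) (h0 : Φ 0 = 0) (hn : 𝔹 n n = 0) {η : Fin 4 → ℝ}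
    (hη : 𝔹 η η ≠ 0) (hηn : 𝔹 η n ≠ 0) :
    𝔹 (invMap Φ η) (Φ n) = dualFun Φ n (𝔹 η n) := by
  have hn0 : n ≠ 0 := by rintro rfl; rw [bil_comm, bil_zero_left] at hηn; exact hηn rfl
  unfold invMap dualFun
  set y := (𝔹 η η)⁻¹ • η with hy
  set t := 1 / (2 * 𝔹 η n) with ht
  have ht0 : t ≠ 0 := by rw [ht]; positivity
  have hyy : 𝔹 y y = (𝔹 η η)⁻¹ := by
    rw [hy, bil_smul_left, bil_smul_right]; field_simp
  have hyn : 𝔹 y n = (𝔹 η η)⁻¹ * 𝔹 η n := by rw [hy, bil_smul_left]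
  have hcoh : 𝔹 (y - t • n) (y - t • n) = 0 := by
    rw [bil_sub_smul_self, hn, hyy, hyn, ht]
    field_simp
    ring
  have h1 := (h.coh _ _).2 hcoh
  rw [h.line_eq h0 hn hn0] at h1
  have h2 : 𝔹 (Φ y) (Φ y) ≠ 0 := by
    rw [Ne, h.coh_zero h0, hyy]; exact inv_ne_zero hη
  have h3 := h.lineFun_ne_zero h0 hn hn0 ht0
  have h4 := (h.coh_zero h0 _).2 hn
  rw [bil_sub_smul_self, h4] at h1
  rw [bil_smul_left]
  field_simp
  linarith

lemma Rigid.dualFun_inj (h : Rigid Φ) (h0 : Φ 0 = 0) (hn : 𝔹 n n = 0) (hn0 : n ≠ 0) {u v : ℝ}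
    (huv : dualFun Φ n u = dualFun Φ n v) : u = v := by
  unfold dualFun at huv
  simp only [one_div, _root_.inv_inj] at huv
  have h1 := h.lineFun_inj h0 hn hn0 (mul_left_cancel₀ two_ne_zero huv)
  rw [_root_.inv_inj] at h1
  linarith

/-- The basis dual to `nullB` for the Minkowski form, up to nonzero factors. -/
def dualB : Fin 4 → Fin 4 → ℝ := ![![0, 5, -4, 4], ![0, 0, 1, 0], ![-3, -1, -1, 1], ![3, -1, -1, 1]]

lemma dualB_eq {i j : Fin 4} (hij : i ≠ j) : 𝔹 (dualB j) (nullB i) = 0 := by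
  fin_cases i <;> fin_cases j <;> simp [dualB, nullB, lorentzMink] at hij ⊢ <;> norm_num

lemma dualB_ne (j : Fin 4) : 𝔹 (dualB j) (nullB j) ≠ 0 := by
  fin_cases j <;> simp [dualB, nullB, lorentzMink] <;> norm_num

lemma timeVec_nullB (i : Fin 4) : 𝔹 timeVec (nullB i) ≠ 0 := by
  fin_cases i <;> simp [timeVec, nullB, lorentzMink]

lemma timeVec_nullA (i : Fin 4) : 𝔹 timeVec (nullA i) = 1 := by
  fin_cases i <;> simp [timeVec, nullA, lorentzMink]

lemma timeVec_timeVec : 𝔹 timeVec timeVec = 1 := by simp [timeVec, lorentzMink]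

lemma nullB_bil_sum (c : Fin 4 → ℝ) (v : Fin 4 → Fin 4 → ℝ) (w : Fin 4 → ℝ) :
    𝔹 w (fun k => ∑ i, c i * v i k) = ∑ i, c i * 𝔹 w (v i) := by
  simp only [lorentzMink, Fin.sum_univ_four]; ring

/-- The images of the vectors of `nullB` are linearly independent: by `Rigid.invMap_bil`, moving
`η` in the direction of `dualB j` changes the pairing of `invMap Φ η` with `Φ (nullB j)`, but with
no other `Φ (nullB i)`. -/
lemma Rigid.det_ne_zero (h : Rigid Φ) (h0 : Φ 0 = 0) :
    (Matrix.of fun i => Φ (nullB i)).det ≠ 0 := by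
  intro hdet
  obtain ⟨c, hc0, hc⟩ := Matrix.exists_vecMul_eq_zero_iff.2 hdet
  obtain ⟨j, hj⟩ : ∃ j, c j ≠ 0 := by
    by_contra! hcon; exact hc0 (funext hcon)
  have hsum : (fun k => ∑ i, c i * Φ (nullB i) k) = 0 := by
    rw [← hc]; ext k; simp [Matrix.vecMul, dotProduct]
  have key : ∀ w, ∑ i, c i * 𝔹 w (Φ (nullB i)) = 0 := by
    intro w
    rw [← nullB_bil_sum, hsum, bil_comm, bil_zero_left]
  have e1 : ∀ᶠ ε in 𝓝[≠] (0 : ℝ),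
      𝔹 (timeVec + ε • dualB j) (timeVec + ε • dualB j) ≠ 0 := by
    have hc : Continuous fun ε : ℝ =>
      𝔹 (timeVec + ε • dualB j) (timeVec + ε • dualB j) := by fun_prop
    refine (hc.continuousAt.eventually_ne ?_).filter_mono nhdsWithin_le_nhds
    simp [timeVec_timeVec]
  have e2 : ∀ᶠ ε in 𝓝[≠] (0 : ℝ), ∀ i, 𝔹 (timeVec + ε • dualB j) (nullB i) ≠ 0 := by
    rw [eventually_all]
    intro i
    have hc : Continuous fun ε : ℝ => 𝔹 (timeVec + ε • dualB j) (nullB i) := by fun_prop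
    refine (hc.continuousAt.eventually_ne ?_).filter_mono nhdsWithin_le_nhds
    simpa using timeVec_nullB i
  obtain ⟨ε, ⟨h1, h2⟩, h3⟩ := ((e1.and e2).and self_mem_nhdsWithin).exists
  have k1 := key (invMap Φ (timeVec + ε • dualB j))
  have k2 := key (invMap Φ timeVec)
  have k3 : ∑ i, c i * (𝔹 (invMap Φ (timeVec + ε • dualB j)) (Φ (nullB i))
      - 𝔹 (invMap Φ timeVec) (Φ (nullB i))) = 0 := by
    simp only [mul_sub, Finset.sum_sub_distrib, k1, k2, sub_zero]
  have ht : 𝔹 timeVec timeVec ≠ 0 := by rw [timeVec_timeVec]; exact one_ne_zero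
  simp only [h.invMap_bil h0 (nullB_null _) h1 (h2 _),
    h.invMap_bil h0 (nullB_null _) ht (timeVec_nullB _)] at k3
  rw [Finset.sum_eq_single j] at k3
  · rcases mul_eq_zero.1 k3 with k | k
    · exact hj k
    · have k := h.dualFun_inj h0 (nullB_null j) (nullB_ne_zero j) (sub_eq_zero.1 k)
      rw [bil_add_left, add_eq_left, bil_smul_left] at k
      exact mul_ne_zero h3 (dualB_ne j) k
  · intro i _ hij
    rw [bil_add_left, bil_smul_left, dualB_eq hij, mul_zero, add_zero, sub_self, mul_zero]
  · simp

lemma Rigid.eq_zero_of_orth (h : Rigid Φ) (h0 : Φ 0 = 0) {w : Fin 4 → ℝ}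
    (hw : ∀ i, 𝔹 w (Φ (nullB i)) = 0) : w = 0 := by
  have h1 : (Matrix.of fun i => Φ (nullB i)).mulVec ![-w 0, -w 1, -w 2, w 3] = 0 := by
    ext i
    have := hw i
    simp only [lorentzMink] at this
    simp [Matrix.mulVec, dotProduct, Fin.sum_univ_four]
    linarith
  have h2 := Matrix.eq_zero_of_mulVec_eq_zero (h.det_ne_zero h0) h1
  have a0 := congrFun h2 0
  have a1 := congrFun h2 1
  have a2 := congrFun h2 2
  have a3 := congrFun h2 3
  simp at a0 a1 a2 a3
  ext i
  fin_cases i <;> simp <;> assumption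

/-- For `n` in `nullA` there are directions `ξ` and `ζ`, with opposite pairings with `n`, such
that each vector of `nullB` is orthogonal to one of the two. -/
lemma exists_split (i : Fin 4) : ∃ ξ ζ : Fin 4 → ℝ, 𝔹 ξ (nullA i) = 1 ∧ 𝔹 ζ (nullA i) = -1 ∧
    ∀ j, 𝔹 ξ (nullB j) = 0 ∨ 𝔹 ζ (nullB j) = 0 := by
  fin_cases i
  · refine ⟨![-1, 0, 0, 0], ![0, -5/4, 0, -1], ?_, ?_, fun j => ?_⟩
    · simp [nullA, lorentzMink]
    · simp [nullA, lorentzMink]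
    · fin_cases j <;> simp [nullB, lorentzMink]
  · refine ⟨![1, 0, 0, 0], ![0, -5/4, 0, -1], ?_, ?_, fun j => ?_⟩
    · simp [nullA, lorentzMink]
    · simp [nullA, lorentzMink]
    · fin_cases j <;> simp [nullB, lorentzMink]
  · refine ⟨![0, -1/2, -1/2, 1/2], ![0, 5, 0, 4], ?_, ?_, fun j => ?_⟩
    · simp [nullA, lorentzMink]; norm_num
    · simp [nullA, lorentzMink]; norm_num
    · fin_cases j <;> simp [nullB, lorentzMink] <;> norm_num
  · refine ⟨![0, -1/2, -1/2, 1/2], ![0, 0, 1, 0], ?_, ?_, fun j => ?_⟩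
    · simp [nullA, lorentzMink]; norm_num
    · simp [nullA, lorentzMink]
    · fin_cases j <;> simp [nullB, lorentzMink]; norm_num

/-- With `ξ`, `ζ` from `exists_split`, the mixed second difference of `invMap Φ` along them is orthogonal to every
`Φ (nullB j)`, so it vanishes; paired with `Φ n` it is a second difference of `dualFun Φ n`. -/
lemma Rigid.dualFun_midpoint (h : Rigid Φ) (h0 : Φ 0 = 0) (i : Fin 4) {u : ℝ} (hu : u ≠ 0) :
    ∀ᶠ δ in 𝓝 (0 : ℝ), dualFun Φ (nullA i) (u + δ) + dualFun Φ (nullA i) (u - δ)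
      = 2 * dualFun Φ (nullA i) u := by
  obtain ⟨ξ, ζ, hξ, hζ, hs⟩ := exists_split i
  set η := u • timeVec with hη
  have hηη : 𝔹 η η ≠ 0 := by
    rw [hη, bil_smul_left, bil_smul_right, timeVec_timeVec]; positivity
  have hηA : 𝔹 η (nullA i) = u := by rw [hη, bil_smul_left, timeVec_nullA, mul_one]
  have hηB : ∀ j, 𝔹 η (nullB j) ≠ 0 := fun j => by
    rw [hη, bil_smul_left]; exact mul_ne_zero hu (timeVec_nullB j)
  have gen : ∀ v : Fin 4 → ℝ, ∀ᶠ δ in 𝓝 (0 : ℝ), 𝔹 (η + δ • v) (η + δ • v) ≠ 0 ∧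
      𝔹 (η + δ • v) (nullA i) ≠ 0 ∧ ∀ j, 𝔹 (η + δ • v) (nullB j) ≠ 0 := by
    intro v
    rw [eventually_and, eventually_and, eventually_all]
    have c1 : Continuous fun δ : ℝ => 𝔹 (η + δ • v) (η + δ • v) := by fun_prop
    have c2 : ∀ n, Continuous fun δ : ℝ => 𝔹 (η + δ • v) n := by intro n; fun_prop
    refine ⟨c1.continuousAt.eventually_ne ?_, (c2 _).continuousAt.eventually_ne ?_,
      fun j => (c2 _).continuousAt.eventually_ne ?_⟩
    · simpa using hηη
    · simpa [hηA] using hu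
    · simpa using hηB j
  filter_upwards [gen ξ, gen ζ, gen (ξ + ζ)] with δ g1 g2 g3
  have hz : invMap Φ (η + δ • (ξ + ζ)) - invMap Φ (η + δ • ξ) - invMap Φ (η + δ • ζ)
      + invMap Φ η = 0 := by
    refine h.eq_zero_of_orth h0 fun j => ?_
    have hB := nullB_null j
    rw [bil_add_left, bil_sub_left, bil_sub_left, h.invMap_bil h0 hB g1.1 (g1.2.2 j),
      h.invMap_bil h0 hB g2.1 (g2.2.2 j), h.invMap_bil h0 hB g3.1 (g3.2.2 j),
      h.invMap_bil h0 hB hηη (hηB j)]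
    simp only [bil_add_left, bil_smul_left]
    rcases hs j with e | e <;> simp [e]
  have hp : 𝔹 (invMap Φ (η + δ • (ξ + ζ)) - invMap Φ (η + δ • ξ) - invMap Φ (η + δ • ζ)
      + invMap Φ η) (Φ (nullA i)) = 0 := by rw [hz, bil_zero_left]
  have hA := nullA_null i
  rw [bil_add_left, bil_sub_left, bil_sub_left, h.invMap_bil h0 hA g1.1 g1.2.1,
      h.invMap_bil h0 hA g2.1 g2.2.1, h.invMap_bil h0 hA g3.1 g3.2.1,
      h.invMap_bil h0 hA hηη (by rwa [hηA])] at hp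
  simp only [bil_add_left, bil_smul_left, hηA, hξ, hζ, mul_one, mul_neg, add_neg_cancel, mul_zero,
    add_zero, ← sub_eq_add_neg] at hp
  linarith

end

/-! ### Affinity along null lines -/

lemma Rigid.dualFun_cont {Φ : (Fin 4 → ℝ) → (Fin 4 → ℝ)} (h : Rigid Φ) (h0 : Φ 0 = 0)
    {n : Fin 4 → ℝ} (hn : 𝔹 n n = 0) (hn0 : n ≠ 0) :
    ContinuousOn (dualFun Φ n) (Set.Ioi 0) := by
  intro u hu
  have hu : 0 < u := hu
  have h1 : lineFun Φ n (1 / (2 * u)) ≠ 0 := h.lineFun_ne_zero h0 hn hn0 (by positivity)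
  have h2 := h.lineFun_cont (n := n)
  have h3 : ContinuousAt (fun u : ℝ => 1 / (2 * u)) u :=
    continuousAt_const.div (by fun_prop) (by positivity)
  have h4 : ContinuousAt (fun u : ℝ => lineFun Φ n (1 / (2 * u))) u :=
    ContinuousAt.comp (g := lineFun Φ n) h2.continuousAt h3
  exact (continuousAt_const.div (continuousAt_const.mul h4)
    (mul_ne_zero two_ne_zero h1)).continuousWithinAt

/-- `dualFun` is affine on the positive half-line, so `lineFun` is fractional linear there. -/
lemma Rigid.lineFun_fractional {Φ : (Fin 4 → ℝ) → (Fin 4 → ℝ)} (h : Rigid Φ) (h0 : Φ 0 = 0)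
    (i : Fin 4) : ∃ α β : ℝ, ∀ t : ℝ, 0 < t → lineFun Φ (nullA i) t * (α + β * t) = t := by
  obtain ⟨α, β, H⟩ := affine_of_local_midpoint
    (h.dualFun_cont h0 (nullA_null i) (nullA_ne_zero i))
    (fun u hu => h.dualFun_midpoint h0 i hu.ne')
  refine ⟨α, 2 * β, fun t ht => ?_⟩
  have h1 := H (1 / (2 * t)) (by positivity)
  have h2 : 1 / (2 * (1 / (2 * t))) = t := by field_simp
  rw [dualFun, h2] at h1
  have h3 := h.lineFun_ne_zero h0 (nullA_null i) (nullA_ne_zero i) ht.ne'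
  field_simp at h1
  linarith

lemma Rigid.line_affine {φ : (Fin 4 → ℝ) → (Fin 4 → ℝ)} (h : Rigid φ) (i : Fin 4)
    (p : Fin 4 → ℝ) (t : ℝ) :
    φ (p + t • nullA i) = φ p + t • (φ (p + nullA i) - φ p) := by
  set n := nullA i with hn
  set F : ℝ → ℝ := fun t => φ (p + t • n) 3 with hF
  have hT := fun t₀ : ℝ => h.translate (p + t₀ • n)
  have h0 : ∀ q : Fin 4 → ℝ, (fun x => φ (q + x) - φ q) 0 = 0 := fun q => by simp
  have hlf : ∀ t₀ t : ℝ, lineFun (fun x => φ (p + t₀ • n + x) - φ (p + t₀ • n)) n t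
      = (F (t₀ + t) - F t₀) / (F (t₀ + 1) - F t₀) := by
    intro t₀ t
    simp only [lineFun, hF, Pi.sub_apply, add_smul, one_smul, add_assoc]
  have hc : ∀ t₀, F (t₀ + 1) - F t₀ ≠ 0 := by
    intro t₀
    have := (hT t₀).three_ne_zero (h0 _) (nullA_null i) (nullA_ne_zero i)
    simpa only [hF, Pi.sub_apply, add_smul, one_smul, add_assoc] using this
  have hinj : Function.Injective F := by
    intro s t hst
    apply (hT 0).lineFun_inj (h0 _) (nullA_null i) (nullA_ne_zero i)
    rw [hlf, hlf, zero_add, zero_add, zero_add, hst]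
  have haff := affine_of_fractional hinj (fun t₀ => by
    obtain ⟨α, β, H⟩ := (hT t₀).lineFun_fractional (h0 _) i
    refine ⟨α / (F (t₀ + 1) - F t₀), β / (F (t₀ + 1) - F t₀), fun t ht => ?_⟩
    have h1 := H t ht
    rw [hlf] at h1
    linear_combination h1) t
  have e := (hT 0).line_eq (h0 _) (nullA_null i) (nullA_ne_zero i) t
  rw [hlf] at e
  have h1 := hc 0
  simp only [zero_add, zero_smul, add_zero] at e h1
  have e2 : (F t - F 0) / (F 1 - F 0) = t := by rw [haff]; field_simp; ring
  rw [e2, sub_eq_iff_eq_add] at e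
  rw [e, add_comm]

/-! ### Affinity and the conformal factor -/

/-- If `a + t • e` is null for all `t`, then `a` and `e` are null and orthogonal. -/
lemma null_family {a e : Fin 4 → ℝ} (H : ∀ t : ℝ, 𝔹 (a + t • e) (a + t • e) = 0) :
    𝔹 a a = 0 ∧ 𝔹 e e = 0 ∧ 𝔹 a e = 0 := by
  have e0 : ∀ t : ℝ, 𝔹 a a + 2 * t * 𝔹 a e + t ^ 2 * 𝔹 e e = 0 := by
    intro t
    rw [← H t]
    simp only [lorentzMink, Pi.add_apply, Pi.smul_apply, smul_eq_mul]; ring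
  have h0 := e0 0
  have h1 := e0 1
  have h2 := e0 2
  refine ⟨?_, ?_, ?_⟩ <;> linarith

/-- The defect of a parallelogram spanned by two non-parallel null vectors would be a null vector
orthogonal to, hence parallel to, the images of both sides. -/
lemma Rigid.parallelogram {φ : (Fin 4 → ℝ) → (Fin 4 → ℝ)} (h : Rigid φ) (i j : Fin 4)
    (p : Fin 4 → ℝ) (t : ℝ) :
    φ (p + t • nullA i + nullA j) - φ (p + t • nullA i) = φ (p + nullA j) - φ p := by
  by_cases hij : i = j
  · subst hij
    have e1 := h.line_affine i p (t + 1)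
    have e2 := h.line_affine i p t
    rw [add_smul, one_smul, ← add_assoc] at e1
    rw [e1, e2]
    module
  set n := nullA i with hn
  set m := nullA j with hm
  have swap : p + n + m = p + m + n := by abel
  set E := φ (p + n + m) - φ (p + n) - (φ (p + m) - φ p) with hE
  have f1 : ∀ t : ℝ, φ (p + t • n + m) - φ (p + t • n) = (φ (p + m) - φ p) + t • E := by
    intro t
    have e1 := h.line_affine i p t
    have e2 := h.line_affine i (p + m) t
    have e3 : p + t • n + m = p + m + t • n := by abel
    rw [e3, e2, e1, hE, swap]
    module
  have f2 : ∀ t : ℝ, φ (p + t • m + n) - φ (p + t • m) = (φ (p + n) - φ p) + t • E := by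
    intro t
    have e1 := h.line_affine j p t
    have e2 := h.line_affine j (p + n) t
    have e3 : p + t • m + n = p + n + t • m := by abel
    rw [e3, e2, e1, hE]
    module
  have side : ∀ (q : Fin 4 → ℝ) (k : Fin 4),
      𝔹 (φ (q + nullA k) - φ q) (φ (q + nullA k) - φ q) = 0 := by
    intro q k
    rw [h.coh, add_sub_cancel_left]
    exact nullA_null k
  obtain ⟨a1, a2, a3⟩ := null_family (a := φ (p + m) - φ p) (e := E)
    (fun t => by rw [← f1]; exact side _ _)
  obtain ⟨b1, -, b3⟩ := null_family (a := φ (p + n) - φ p) (e := E)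
    (fun t => by rw [← f2]; exact side _ _)
  have hE0 : E = 0 := by
    by_contra hne
    have c1 := orth_trans hne a2 a1 (by rw [bil_comm]; exact a3) (by rw [bil_comm]; exact b3)
    have c2 : 𝔹 (φ (p + m) - φ (p + n)) (φ (p + m) - φ (p + n)) = 0 := by
      have := bil_sub_smul_self 1 (φ (p + m) - φ p) (φ (p + n) - φ p)
      rw [one_smul, sub_sub_sub_cancel_right] at this
      rw [this, a1, b1, c1]
      ring
    rw [h.coh, add_sub_add_left_eq_sub] at c2
    have c3 := orth_of_null (nullA_null j) (nullA_null i) c2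
    exact nullA_nullA (Ne.symm hij) c3
  rw [f1, hE0, smul_zero, add_zero]

lemma Rigid.step {φ : (Fin 4 → ℝ) → (Fin 4 → ℝ)} (h : Rigid φ) (i : Fin 4)
    (a b c d : ℝ) (t : ℝ) :
    φ (a • nullA 0 + b • nullA 1 + c • nullA 2 + d • nullA 3 + t • nullA i)
      = φ (a • nullA 0 + b • nullA 1 + c • nullA 2 + d • nullA 3) + t • (φ (nullA i) - φ 0) := by
  have e1 := h.parallelogram 0 i 0 a
  have e2 := h.parallelogram 1 i (0 + a • nullA 0) b
  have e3 := h.parallelogram 2 i (0 + a • nullA 0 + b • nullA 1) c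
  have e4 := h.parallelogram 3 i (0 + a • nullA 0 + b • nullA 1 + c • nullA 2) d
  rw [e3, e2, e1] at e4
  simp only [zero_add] at e4
  rw [h.line_affine, e4]

lemma Rigid.expand {φ : (Fin 4 → ℝ) → (Fin 4 → ℝ)} (h : Rigid φ) (a b c d : ℝ) :
    φ (a • nullA 0 + b • nullA 1 + c • nullA 2 + d • nullA 3)
      = φ 0 + a • (φ (nullA 0) - φ 0) + b • (φ (nullA 1) - φ 0) + c • (φ (nullA 2) - φ 0)
        + d • (φ (nullA 3) - φ 0) := by
  have e1 := h.step 0 0 0 0 0 a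
  have e2 := h.step 1 a 0 0 0 b
  have e3 := h.step 2 a b 0 0 c
  have e4 := h.step 3 a b c 0 d
  simp only [zero_smul, add_zero, zero_add] at e1 e2 e3 e4
  rw [e4, e3, e2, e1]

lemma nullA_expand (x : Fin 4 → ℝ) :
    x = ((x 3 - x 1 - x 2 + x 0) / 2) • nullA 0 + ((x 3 - x 1 - x 2 - x 0) / 2) • nullA 1
      + x 1 • nullA 2 + x 2 • nullA 3 := by
  ext k
  fin_cases k <;> simp [nullA] <;> ring

lemma Rigid.exists_matrix {φ : (Fin 4 → ℝ) → (Fin 4 → ℝ)} (h : Rigid φ) :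
    ∃ A : Matrix (Fin 4) (Fin 4) ℝ, ∀ x, φ x = A.mulVec x + φ 0 := by
  set N := fun i => φ (nullA i) - φ 0 with hN
  refine ⟨Matrix.of fun k => ![(N 0 k - N 1 k) / 2, N 2 k - (N 0 k + N 1 k) / 2,
    N 3 k - (N 0 k + N 1 k) / 2, (N 0 k + N 1 k) / 2], fun x => ?_⟩
  conv_lhs => rw [nullA_expand x]
  rw [h.expand]
  ext k
  simp [Matrix.mulVec, dotProduct, Fin.sum_univ_four, hN]
  ring

/-- Two orthogonal vectors of Minkowski space are not both timelike. -/
lemma not_orth_timelike {u v : Fin 4 → ℝ} (hu : 0 < 𝔹 u u) (hv : 0 < 𝔹 v v) : 𝔹 u v ≠ 0 := by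
  intro huv
  simp only [lorentzMink] at *
  have hs : (u 0 * v 0 + u 1 * v 1 + u 2 * v 2) ^ 2
      ≤ (u 0 ^ 2 + u 1 ^ 2 + u 2 ^ 2) * (v 0 ^ 2 + v 1 ^ 2 + v 2 ^ 2) := by
    nlinarith [sq_nonneg (u 0 * v 1 - u 1 * v 0), sq_nonneg (u 0 * v 2 - u 2 * v 0),
      sq_nonneg (u 1 * v 2 - u 2 * v 1)]
  have h1 : u 0 * v 0 + u 1 * v 1 + u 2 * v 2 = u 3 * v 3 := by linarith
  rw [h1] at hs
  have h2 : u 0 ^ 2 + u 1 ^ 2 + u 2 ^ 2 < u 3 ^ 2 := by nlinarith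
  have h3 : v 0 ^ 2 + v 1 ^ 2 + v 2 ^ 2 < v 3 ^ 2 := by nlinarith
  have h4 : (u 0 ^ 2 + u 1 ^ 2 + u 2 ^ 2) * (v 0 ^ 2 + v 1 ^ 2 + v 2 ^ 2) < u 3 ^ 2 * v 3 ^ 2 :=
    mul_lt_mul'' h2 h3 (by positivity) (by positivity)
  nlinarith

lemma transpose_mink_mul_apply (A : Matrix (Fin 4) (Fin 4) ℝ) (i j : Fin 4) :
    (Aᵀ * minkMatrix * A) i j = 𝔹 (fun k => A k i) (fun k => A k j) := by
  simp [Matrix.mul_apply, minkMatrix, Fin.sum_univ_four, Matrix.diagonal, lorentzMink]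
  ring

/-- A matrix preserving null vectors multiplies the Minkowski form by a factor; the factor is
read off from finitely many null vectors. -/
lemma conformal_of_null {A : Matrix (Fin 4) (Fin 4) ℝ}
    (H : ∀ x, 𝔹 x x = 0 → 𝔹 (A.mulVec x) (A.mulVec x) = 0) :
    Aᵀ * minkMatrix * A = 𝔹 (fun k => A k 3) (fun k => A k 3) • minkMatrix := by
  set S : Fin 4 → Fin 4 → ℝ := fun i j => 𝔹 (fun k => A k i) (fun k => A k j) with hS
  have hsym : ∀ i j, S i j = S j i := fun i j => bil_comm _ _
  have hq : ∀ x, 𝔹 x x = 0 → x 0 ^ 2 * S 0 0 + x 1 ^ 2 * S 1 1 + x 2 ^ 2 * S 2 2 + x 3 ^ 2 * S 3 3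
      + 2 * (x 0 * x 1 * S 0 1 + x 0 * x 2 * S 0 2 + x 0 * x 3 * S 0 3 + x 1 * x 2 * S 1 2
        + x 1 * x 3 * S 1 3 + x 2 * x 3 * S 2 3) = 0 := by
    intro x hx
    rw [← H x hx]
    simp only [hS, lorentzMink, Matrix.mulVec, dotProduct, Fin.sum_univ_four]
    ring
  have a1 := hq ![1, 0, 0, 1] (by simp [lorentzMink])
  have a2 := hq ![-1, 0, 0, 1] (by simp [lorentzMink])
  have a3 := hq ![0, 1, 0, 1] (by simp [lorentzMink])
  have a4 := hq ![0, -1, 0, 1] (by simp [lorentzMink])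
  have a5 := hq ![0, 0, 1, 1] (by simp [lorentzMink])
  have a6 := hq ![0, 0, -1, 1] (by simp [lorentzMink])
  have a7 := hq ![3, 4, 0, 5] (by simp [lorentzMink]; norm_num)
  have a8 := hq ![3, 0, 4, 5] (by simp [lorentzMink]; norm_num)
  have a9 := hq ![0, 3, 4, 5] (by simp [lorentzMink]; norm_num)
  simp at a1 a2 a3 a4 a5 a6 a7 a8 a9
  ext i j
  rw [transpose_mink_mul_apply]
  change S i j = (S 3 3 • minkMatrix) i j
  have s1 := hsym 1 0
  have s2 := hsym 2 0
  have s3 := hsym 3 0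
  have s4 := hsym 2 1
  have s5 := hsym 3 1
  have s6 := hsym 3 2
  clear_value S
  fin_cases i <;> fin_cases j <;> simp [minkMatrix, Matrix.diagonal] <;> linarith

lemma minkMatrix_sq : minkMatrix * minkMatrix = 1 := by
  ext i j
  fin_cases i <;> fin_cases j <;> simp [minkMatrix, Matrix.diagonal, Matrix.mul_apply]

lemma Rigid.main {φ : (Fin 4 → ℝ) → (Fin 4 → ℝ)} (h : Rigid φ) :
    ∃ (k : ℝ) (Q : Matrix (Fin 4) (Fin 4) ℝ) (a : Fin 4 → ℝ),
       0 < k ∧ Q * minkMatrix * Qᵀ = minkMatrix ∧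
       ∀ r : Fin 4 → ℝ, φ r = k • Q.mulVec r + a := by
  obtain ⟨A, hA⟩ := h.exists_matrix
  have hcoh : ∀ x, 𝔹 (A.mulVec x) (A.mulVec x) = 0 ↔ 𝔹 x x = 0 := by
    intro x
    have := h.coh x 0
    rwa [hA x, add_sub_cancel_right, sub_zero] at this
  have hconf := conformal_of_null fun x hx => (hcoh x).2 hx
  set κ := 𝔹 (fun k => A k 3) (fun k => A k 3) with hκ
  have hκ0 : κ ≠ 0 := by
    intro h0
    have e : A.mulVec timeVec = fun k => A k 3 := by
      ext k; simp [Matrix.mulVec, dotProduct, Fin.sum_univ_four, timeVec]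
    have h1 := (hcoh timeVec).1 (by rw [e]; exact h0)
    rw [timeVec_timeVec] at h1
    exact one_ne_zero h1
  have entry : ∀ i j, 𝔹 (fun k => A k i) (fun k => A k j) = κ * minkMatrix i j := by
    intro i j
    rw [← transpose_mink_mul_apply, hconf]; simp
  have hκpos : 0 < κ := by
    rcases hκ0.lt_or_gt with hneg | hpos
    · have e0 := entry 0 0
      have e1 := entry 1 1
      have e2 := entry 0 1
      simp [minkMatrix] at e0 e1 e2
      exact absurd e2 (not_orth_timelike (by linarith) (by linarith))
    · exact hpos
  set k := √κ with hk
  have hk0 : 0 < k := Real.sqrt_pos.2 hκpos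
  have hkk : k * k = κ := Real.mul_self_sqrt hκpos.le
  refine ⟨k, k⁻¹ • A, φ 0, hk0, ?_, fun r => ?_⟩
  · set Q := k⁻¹ • A with hQ
    have h1 : Qᵀ * minkMatrix * Q = minkMatrix := by
      rw [hQ, Matrix.transpose_smul, Matrix.smul_mul, Matrix.smul_mul, Matrix.mul_smul, hconf,
        smul_smul, smul_smul, ← hkk]
      have : k⁻¹ * (k⁻¹ * (k * k)) = 1 := by field_simp
      rw [← mul_assoc] at this
      rw [this, one_smul]
    have h2 : (minkMatrix * Qᵀ * minkMatrix) * Q = 1 := by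
      rw [Matrix.mul_assoc, Matrix.mul_assoc, ← Matrix.mul_assoc Qᵀ, h1, minkMatrix_sq]
    have h3 := mul_eq_one_comm.1 h2
    calc Q * minkMatrix * Qᵀ
        = Q * (minkMatrix * Qᵀ * minkMatrix) * minkMatrix := by
          simp only [Matrix.mul_assoc, minkMatrix_sq, Matrix.mul_one]
      _ = minkMatrix := by rw [h3, Matrix.one_mul]
  · rw [hA r, Matrix.smul_mulVec, smul_smul, mul_inv_cancel₀ hk0.ne', one_smul]

theorem continuous_lightcone_preserver_is_poincare_similarity_or_degenerate
    (φ : (Fin 4 → ℝ) → (Fin 4 → ℝ)) (hcont : Continuous φ)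
    (hpres : ∀ r₁ r₂ : Fin 4 → ℝ, lorentzMink (r₁ - r₂) (r₁ - r₂) = 0 →
      lorentzMink (φ r₁ - φ r₂) (φ r₁ - φ r₂) = 0) :
    (∃ (k : ℝ) (Q : Matrix (Fin 4) (Fin 4) ℝ) (a : Fin 4 → ℝ),
       0 < k ∧ Q * minkMatrix * Qᵀ = minkMatrix ∧
       ∀ r : Fin 4 → ℝ, φ r = k • Q.mulVec r + a) ∨
    (∃ s' : Fin 4 → ℝ, ∀ r : Fin 4 → ℝ, lorentzMink (φ r - s') (φ r - s') = 0) := by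
  by_cases hdeg : ∃ s' : Fin 4 → ℝ, ∀ r : Fin 4 → ℝ, lorentzMink (φ r - s') (φ r - s') = 0
  · exact Or.inr hdeg
  · push Not at hdeg
    exact Or.inl (NonDeg.rigid ⟨hcont, hpres, hdeg⟩).main
end

section
/- Let φ : H₂ → H₂ be a map such that rank(φ(A)−φ(B)) = 1 whenever rank(A−B) = 1. Then one of the following holds: (1) there exist S ∈ H₂, a hermitian matrix R with R² = R and rank R = 1, and a function ρ : H₂ → ℝ such that φ(A) = ρ(A)·R + S for all A ∈ H₂; or (2) there exist c ∈ {−1, 1}, an invertible 2×2 complex matrix T, and S ∈ H₂ such that either φ(A) = c·T·A·T* + S for all A ∈ H₂, or φ(A) = c·T·Aᵗ·T* + S for all A ∈ H₂. -/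
/-!
Identify `H₂` with `ℝ⁴`; the determinant becomes a quadratic form `q` of signature `(1, 3)`, and two
matrices are adjacent exactly when their difference is a nonzero null vector. Maximal sets of pairwise
adjacent points are light lines, and `φ` maps each light line injectively into a light line.

If two light lines through one point are sent into the same light line, then the whole space is
(`degenerate`); this is alternative (1). Otherwise `φ` also preserves non-adjacency
(`nonadj_of_nondegenerate`). Normalise `φ 0 = 0` and conjugate by the inversion `inv v = v / q v`,
putting `ψ = inv ∘ φ ∘ inv`. Inversion turns the light lines through `0` into families of parallel null
hyperplanes, so for each null `p` the pairing of `ψ a` with `φ p` is a function `h_p` of the pairing of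
`a` with `p` (`exists_transfer`).

Apply this to five null vectors satisfying one linear relation (`frame`). Their images satisfy a linear
relation as well, and all its coefficients are nonzero (`relation_ne_zero`). Varying two pairings at a
time shows that each `h_p` is additive plus a constant (`four_point`, `exists_affine_of_four_point`).
The sign rule for null vectors (`null_triple`) makes the additive parts monotone, hence linear, and the
constants vanish because `h_p` has no zero. So `ψ` is linear on generic points and multiplies `q` by a
constant there, hence so does `φ`, and adjacency extends this to all points
(`linear_of_nondegenerate`). Linear similarities of `q` are the maps `± T A T*` and `± T Aᵗ T*`
(`exists_conj`), which is alternative (2).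
-/

open Matrix

/-- The real vector space of 2×2 complex hermitian matrices. -/
def Herm2 : Type := {A : Matrix (Fin 2) (Fin 2) ℂ // A.IsHermitian}

namespace HermAdj

/-! ### The determinant form on `ℝ⁴` -/

/-- Coordinate space `ℝ⁴` for `H₂`: `v` stands for the hermitian matrix with diagonal `v 0, v 1` and
upper right entry `v 2 + i v 3` (see `toM`). -/
abbrev V := Fin 4 → ℝ

/-- The determinant in these coordinates, a quadratic form of signature `(1, 3)`. -/
def q (v : V) : ℝ := v 0 * v 1 - v 2 ^ 2 - v 3 ^ 2

/-- The polar form of `q`, normalised by `q (v + w) = q v + q w + b v w`. -/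
def b (v w : V) : ℝ := v 0 * w 1 + v 1 * w 0 - 2 * (v 2 * w 2) - 2 * (v 3 * w 3)

lemma b_comm (v w : V) : b v w = b w v := by simp only [b]; ring
lemma b_add_left (u v w : V) : b (u + v) w = b u w + b v w := by
  simp only [b, Pi.add_apply]; ring
lemma b_add_right (u v w : V) : b u (v + w) = b u v + b u w := by
  simp only [b, Pi.add_apply]; ring
lemma b_sub_left (u v w : V) : b (u - v) w = b u w - b v w := by
  simp only [b, Pi.sub_apply]; ring
lemma b_sub_right (u v w : V) : b u (v - w) = b u v - b u w := by
  simp only [b, Pi.sub_apply]; ring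
lemma b_smul_left (t : ℝ) (v w : V) : b (t • v) w = t * b v w := by
  simp only [b, Pi.smul_apply, smul_eq_mul]; ring
lemma b_smul_right (t : ℝ) (v w : V) : b v (t • w) = t * b v w := by
  simp only [b, Pi.smul_apply, smul_eq_mul]; ring
lemma b_zero_left (w : V) : b 0 w = 0 := by simp [b]
lemma b_zero_right (w : V) : b w 0 = 0 := by simp [b]
lemma b_self (v : V) : b v v = 2 * q v := by simp only [b, q]; ring
lemma q_add (v w : V) : q (v + w) = q v + q w + b v w := by
  simp only [b, q, Pi.add_apply]; ring
lemma q_sub (v w : V) : q (v - w) = q v + q w - b v w := by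
  simp only [b, q, Pi.sub_apply]; ring
lemma q_smul (t : ℝ) (v : V) : q (t • v) = t ^ 2 * q v := by
  simp only [q, Pi.smul_apply, smul_eq_mul]; ring
lemma q_zero : q 0 = 0 := by simp [q]
lemma q_neg (v : V) : q (-v) = q v := by simp [q]

/-- The orthogonal complement of a null vector contains no timelike vector. -/
lemma q_nonpos_of_orth {n w : V} (hn : n ≠ 0) (hq : q n = 0) (hb : b n w = 0) : q w ≤ 0 := by
  simp only [q, b] at *
  by_cases h0 : n 0 = 0
  · have h2 : n 2 = 0 := by
      rw [h0] at hq
      exact pow_eq_zero_iff two_ne_zero |>.mp (by nlinarith [sq_nonneg (n 2), sq_nonneg (n 3)])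
    have h3 : n 3 = 0 := by
      rw [h0] at hq
      exact pow_eq_zero_iff two_ne_zero |>.mp (by nlinarith [sq_nonneg (n 2), sq_nonneg (n 3)])
    have h1 : n 1 ≠ 0 := by
      intro h1; apply hn; ext i; fin_cases i <;> simp [h0, h1, h2, h3]
    have : w 0 = 0 := by
      have : n 1 * w 0 = 0 := by rw [h0, h2, h3] at hb; linarith
      simpa [h1] using this
    rw [this]; nlinarith [sq_nonneg (w 2), sq_nonneg (w 3)]
  · have key : n 0 ^ 2 * (w 0 * w 1 - w 2 ^ 2 - w 3 ^ 2)
        = -(n 0 * w 2 - w 0 * n 2) ^ 2 - (n 0 * w 3 - w 0 * n 3) ^ 2 := by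
      linear_combination (w 0 * n 0) * hb - (w 0) ^ 2 * hq
    have : 0 < n 0 ^ 2 := by positivity
    by_contra hc
    push Not at hc
    nlinarith [mul_pos this hc, sq_nonneg (n 0 * w 2 - w 0 * n 2),
      sq_nonneg (n 0 * w 3 - w 0 * n 3)]

/-- Two orthogonal null vectors are proportional. -/
lemma exists_smul_of_orth {n w : V} (hn : n ≠ 0) (hq : q n = 0) (hb : b n w = 0)
    (hw : q w = 0) : ∃ c : ℝ, w = c • n := by
  simp only [q, b] at *
  by_cases h0 : n 0 = 0
  · have h2 : n 2 = 0 := by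
      rw [h0] at hq
      exact pow_eq_zero_iff two_ne_zero |>.mp (by nlinarith [sq_nonneg (n 2), sq_nonneg (n 3)])
    have h3 : n 3 = 0 := by
      rw [h0] at hq
      exact pow_eq_zero_iff two_ne_zero |>.mp (by nlinarith [sq_nonneg (n 2), sq_nonneg (n 3)])
    have h1 : n 1 ≠ 0 := by
      intro h1; apply hn; ext i; fin_cases i <;> simp [h0, h1, h2, h3]
    have w0 : w 0 = 0 := by
      have : n 1 * w 0 = 0 := by rw [h0, h2, h3] at hb; linarith
      simpa [h1] using this
    rw [w0] at hw
    have w2 : w 2 = 0 := by nlinarith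
    have w3 : w 3 = 0 := by nlinarith
    refine ⟨w 1 / n 1, ?_⟩
    ext i; fin_cases i <;> simp [h0, h1, h2, h3, w0, w2, w3]
  · have key : 0 = -(n 0 * w 2 - w 0 * n 2) ^ 2 - (n 0 * w 3 - w 0 * n 3) ^ 2 := by
      linear_combination (w 0 * n 0) * hb - (w 0) ^ 2 * hq - n 0 ^ 2 * hw
    have e2 : n 0 * w 2 - w 0 * n 2 = 0 := by
      nlinarith [sq_nonneg (n 0 * w 2 - w 0 * n 2), sq_nonneg (n 0 * w 3 - w 0 * n 3)]
    have e3 : n 0 * w 3 - w 0 * n 3 = 0 := by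
      nlinarith [sq_nonneg (n 0 * w 2 - w 0 * n 2), sq_nonneg (n 0 * w 3 - w 0 * n 3)]
    refine ⟨w 0 / n 0, ?_⟩
    ext i; fin_cases i
    · simp; field_simp
    · simp; field_simp
      have : n 0 * (n 0 * w 1 - w 0 * n 1) = 0 := by
        linear_combination n 0 * hb - 2 * w 0 * hq + 2 * n 2 * e2 + 2 * n 3 * e3
      have := (mul_eq_zero.mp this).resolve_left h0
      linarith
    · simp; field_simp; linarith
    · simp; field_simp; linarith

/-- Null vectors fall into two half-cones, so the three pairings of a null triple have nonnegative
product. The combination below is the part of `w` orthogonal to `u` (and `v`), scaled by `b u v`. -/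
lemma null_triple {u v w : V} (hu : q u = 0) (hv : q v = 0) (hw : q w = 0) :
    0 ≤ b u v * b v w * b u w := by
  by_cases h : u = 0
  · simp [h, b_zero_left]
  have := q_nonpos_of_orth (w := b u v • w - b v w • u - b u w • v) h hu (by
    simp only [b_sub_right, b_smul_right, b_self, hu]; ring)
  have e : q (b u v • w - b v w • u - b u w • v) = -(b u v * b v w * b u w) := by
    simp only [q_sub, q_smul, b_sub_left, b_smul_left, b_smul_right, hu, hv, hw, b_comm w u,
      b_comm w v]
    ring
  linarith

/-- A point adjacent or equal to two different points of a light line lies on that line. -/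
lemma exists_smul_of_three {R z : V} {x y : ℝ} (hR : R ≠ 0) (hq : q R = 0) (hxy : x ≠ y)
    (h1 : q (z - x • R) = 0) (h2 : q (z - y • R) = 0) : ∃ t : ℝ, z = t • R := by
  simp only [q_sub, q_smul, hq, b_smul_right] at h1 h2
  have hb : b z R = 0 := by
    have : (x - y) * b z R = 0 := by linarith
    exact (mul_eq_zero.mp this).resolve_left (sub_ne_zero.mpr hxy)
  exact exists_smul_of_orth hR hq (by rw [b_comm, hb]) (by rw [hb] at h1; linarith)

/-- A curve on the null cone not contained in any linear hyperplane. -/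
def curve (s : ℝ) : V := ![1, s ^ 2 + s ^ 4, s, s ^ 2]

lemma q_curve (s : ℝ) : q (curve s) = 0 := by simp [q, curve]; ring

lemma finite_orth_curve {W : V} (hW : W ≠ 0) : {s : ℝ | b W (curve s) = 0}.Finite := by
  classical
  let P : Polynomial ℝ := Polynomial.C (W 0) * Polynomial.X ^ 4 +
    Polynomial.C (W 0 - 2 * W 3) * Polynomial.X ^ 2 - Polynomial.C (2 * W 2) * Polynomial.X ^ 1
    + Polynomial.C (W 1)
  have hP : P ≠ 0 := by
    intro h
    have c0 := congrArg (fun p => Polynomial.coeff p 0) h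
    have c1 := congrArg (fun p => Polynomial.coeff p 1) h
    have c2 := congrArg (fun p => Polynomial.coeff p 2) h
    have c4 := congrArg (fun p => Polynomial.coeff p 4) h
    simp only [P, Polynomial.coeff_add, Polynomial.coeff_sub, Polynomial.coeff_C_mul,
      Polynomial.coeff_X_pow, Polynomial.coeff_C, Polynomial.coeff_zero] at c0 c1 c2 c4
    norm_num at c0 c1 c2 c4
    apply hW
    ext i; fin_cases i
    · simpa using c4
    · simpa using c0
    · simpa using c1
    · simp; rw [c4] at c2; linarith
  refine (P.roots.toFinset.finite_toSet).subset ?_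
  intro s hs
  simp only [Set.mem_ofPred_eq] at hs
  simp only [Finset.mem_coe, Multiset.mem_toFinset, Polynomial.mem_roots hP, Polynomial.IsRoot]
  rw [← hs]
  simp [P, b, curve]; ring

/-- There is a null vector orthogonal to none of finitely many given nonzero vectors. -/
lemma exists_null (s : Set V) (hs : s.Finite) (h0 : ∀ W ∈ s, W ≠ 0) :
    ∃ n : V, n ≠ 0 ∧ q n = 0 ∧ ∀ W ∈ s, b W n ≠ 0 := by
  have hfin : (⋃ W ∈ s, {t : ℝ | b W (curve t) = 0}).Finite :=
    hs.biUnion fun W hW => finite_orth_curve (h0 W hW)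
  obtain ⟨t, ht⟩ := hfin.exists_notMem
  refine ⟨curve t, ?_, q_curve t, ?_⟩
  · intro h; simpa [curve] using congrFun h 0
  · intro W hW h
    exact ht (Set.mem_biUnion hW h)

/-! ### Maps sending two light lines through a point into one -/

/-- The hypothesis on `φ` in coordinates: points with nonzero null difference are sent to points with
nonzero null difference. -/
def Preserves (φ : V → V) : Prop :=
  ∀ x y : V, x ≠ y → q (x - y) = 0 → φ x ≠ φ y ∧ q (φ x - φ y) = 0

/-- If two light lines through `0`, in directions `p` and `r`, are sent into the same light line
`ℝ • R`, then all of `V` is sent into it.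

The plane spanned by `p, r` is filled in by light lines meeting the two given ones. The points of this
plane adjacent to a point `X` outside it form a hyperbola; if `φ X` is off the line, `φ` must be
constant on that hyperbola. The same applies to a translate of `X`, whose hyperbola meets the first
one; then two different points of a light line parallel to `r` have the same image, which is absurd. -/
lemma degenerate {φ : V → V} (hφ : Preserves φ) (h0 : φ 0 = 0) {p r R : V} {x y : ℝ}
    (hp : q p = 0) (hr : q r = 0) (hpr : b p r ≠ 0) (hR : R ≠ 0) (hqR : q R = 0)
    (hx : φ p = x • R) (hy : φ r = y • R) (X : V) : ∃ t : ℝ, φ X = t • R := by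
  have p0 : p ≠ 0 := by rintro rfl; exact hpr (b_zero_left _)
  have r0 : r ≠ 0 := by rintro rfl; exact hpr (b_zero_right _)
  have key1 : ∀ X Y Z : V, (∃ t : ℝ, φ X = t • R) → (∃ t : ℝ, φ Y = t • R) → φ X ≠ φ Y →
      Z ≠ X → Z ≠ Y → q (Z - X) = 0 → q (Z - Y) = 0 → ∃ t : ℝ, φ Z = t • R := by
    rintro X Y Z ⟨t, ht⟩ ⟨s, hs⟩ hne hZX hZY h1 h2
    have h1' := (hφ _ _ hZX h1).2
    have h2' := (hφ _ _ hZY h2).2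
    rw [ht] at h1'; rw [hs] at h2'
    refine exists_smul_of_three hR hqR ?_ h1' h2'
    rintro rfl; exact hne (by rw [ht, hs])
  have lineInj : ∀ (X n : V) (s t : ℝ), n ≠ 0 → q n = 0 → s ≠ t →
      φ (X + s • n) ≠ φ (X + t • n) := by
    intro X n s t hn hqn hst
    refine (hφ _ _ ?_ ?_).1
    · intro h
      have h' : s • n = t • n := add_left_cancel h
      exact hst (smul_left_injective ℝ hn h')
    · rw [add_sub_add_left_eq_sub, ← sub_smul, q_smul, hqn, mul_zero]
  have key2 : ∀ (X n : V) (s t : ℝ), n ≠ 0 → q n = 0 → s ≠ t →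
      (∃ c : ℝ, φ (X + s • n) = c • R) → (∃ c : ℝ, φ (X + t • n) = c • R) →
      ∀ u : ℝ, ∃ c : ℝ, φ (X + u • n) = c • R := by
    intro X n s t hn hqn hst hs ht u
    by_cases hus : u = s
    · rwa [hus]
    by_cases hut : u = t
    · rwa [hut]
    refine key1 _ _ _ hs ht (lineInj X n s t hn hqn hst) ?_ ?_ ?_ ?_
    · intro h; exact hus (smul_left_injective ℝ hn (add_left_cancel h))
    · intro h; exact hut (smul_left_injective ℝ hn (add_left_cancel h))
    · rw [add_sub_add_left_eq_sub, ← sub_smul, q_smul, hqn, mul_zero]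
    · rw [add_sub_add_left_eq_sub, ← sub_smul, q_smul, hqn, mul_zero]
  have lp : ∀ a : ℝ, ∃ c : ℝ, φ (a • p) = c • R := by
    intro a
    have := key2 0 p 0 1 p0 hp zero_ne_one ⟨0, by simp [h0]⟩ ⟨x, by simp [hx]⟩ a
    simpa using this
  have lr : ∀ a : ℝ, ∃ c : ℝ, φ (a • r) = c • R := by
    intro a
    have := key2 0 r 0 1 r0 hr zero_ne_one ⟨0, by simp [h0]⟩ ⟨y, by simp [hy]⟩ a
    simpa using this
  have plane : ∀ a c : ℝ, ∃ t : ℝ, φ (a • p + c • r) = t • R := by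
    intro a c
    by_cases ha : a = 0
    · simpa [ha] using lr c
    have step : ∀ e : ℝ, e ≠ 0 → φ (a • p) ≠ φ (e • r) →
        ∃ t : ℝ, φ (a • p + e • r) = t • R := by
      intro e he hne
      refine key1 _ _ _ (lp a) (lr e) hne ?_ ?_ ?_ ?_
      · simp [he, r0]
      · simp [ha, p0]
      · simp [q_smul, hr]
      · simp [q_smul, hp]
    have base : ∃ t : ℝ, φ (a • p + (0 : ℝ) • r) = t • R := by simpa using lp a
    by_cases h1 : φ (a • p) = φ ((1 : ℝ) • r)
    · have h2 : φ (a • p) ≠ φ ((2 : ℝ) • r) := by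
        rw [h1]
        simpa using lineInj 0 r 1 2 r0 hr (by norm_num)
      exact key2 (a • p) r 0 2 r0 hr (by norm_num) base (step 2 (by norm_num) h2) c
    · exact key2 (a • p) r 0 1 r0 hr (by norm_num) base (step 1 (by norm_num) h1) c
  by_contra hX
  -- Decompose `X = w + a0 p + b0 r` with `w` orthogonal to the plane.
  obtain ⟨a0, ha0⟩ : ∃ a0 : ℝ, a0 = b X r / b p r := ⟨_, rfl⟩
  obtain ⟨b0, hb0⟩ : ∃ b0 : ℝ, b0 = b X p / b p r := ⟨_, rfl⟩
  obtain ⟨w, hw⟩ : ∃ w : V, w = X - a0 • p - b0 • r := ⟨_, rfl⟩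
  have hXw : X = w + a0 • p + b0 • r := by rw [hw]; abel
  have hwp : b p w = 0 := by
    rw [hw]; simp only [b_sub_right, b_smul_right, b_self, hp, hb0, b_comm p X]; field_simp; ring
  have hwr : b w r = 0 := by
    rw [hw]; simp only [b_sub_left, b_smul_left, b_self, hr, ha0]; field_simp; ring
  have hqw : q w ≠ 0 := by
    intro h
    obtain ⟨c, hc⟩ := exists_smul_of_orth p0 hp hwp h
    have : c = 0 := by
      rw [hc, b_smul_left] at hwr
      exact (mul_eq_zero.mp hwr).resolve_right hpr
    apply hX
    rw [hXw, hc, this]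
    simpa using plane a0 b0
  obtain ⟨k, hk⟩ : ∃ k : ℝ, k = -q w / b p r := ⟨_, rfl⟩
  have hk0 : k ≠ 0 := by rw [hk]; exact div_ne_zero (neg_ne_zero.mpr hqw) hpr
  have hkq : q w = - (k * b p r) := by rw [hk]; field_simp
  have adjq : ∀ t s a c : ℝ, (a - t) * (c - s) = k →
      q ((X + t • p + s • r) - ((a0 + a) • p + (b0 + c) • r)) = 0 := by
    intro t s a c h
    have e : (X + t • p + s • r) - ((a0 + a) • p + (b0 + c) • r)
        = w + (t - a) • p + (s - c) • r := by rw [hXw]; module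
    rw [e]
    simp only [q_add, q_smul, b_add_left, b_smul_right, b_smul_left, hp, hr, hwr, b_comm w p, hwp,
      hkq, ← h]
    ring
  -- If `X + t p + s r` is not sent into `ℝ • R`, then `φ` is constant on its hyperbola in the plane.
  have hbad : ∀ t s a c a' c' : ℝ, (¬ ∃ e : ℝ, φ (X + t • p + s • r) = e • R) →
      (a - t) * (c - s) = k → (a' - t) * (c' - s) = k →
      φ ((a0 + a) • p + (b0 + c) • r) = φ ((a0 + a') • p + (b0 + c') • r) := by
    intro t s a c a' c' hb h h'
    by_contra hne
    refine hb (key1 _ _ _ (plane _ _) (plane _ _) hne ?_ ?_ (adjq _ _ _ _ h) (adjq _ _ _ _ h'))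
    · intro h; exact hb (h ▸ plane _ _)
    · intro h; exact hb (h ▸ plane _ _)
  have two : ∀ (Y n : V) (s t : ℝ), n ≠ 0 → q n = 0 → s ≠ t →
      (¬ ∃ e : ℝ, φ Y = e • R) → (¬ ∃ e : ℝ, φ (Y + s • n) = e • R) ∨
        (¬ ∃ e : ℝ, φ (Y + t • n) = e • R) := by
    intro Y n s t hn hqn hst hY
    by_contra hc
    push Not at hc
    obtain ⟨c1, c2⟩ := hc
    exact hY (by simpa using key2 Y n s t hn hqn hst c1 c2 0)
  obtain ⟨t, ht1, htb⟩ : ∃ t : ℝ, 1 ≤ t ∧ ¬ ∃ e : ℝ, φ (X + t • p) = e • R := by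
    rcases two X p 1 2 p0 hp (by norm_num) hX with h | h
    · exact ⟨1, le_rfl, h⟩
    · exact ⟨2, by norm_num, h⟩
  obtain ⟨j, hj1, hjb⟩ : ∃ j : ℝ, 1 ≤ j ∧ ¬ ∃ e : ℝ, φ (X + t • p + (-(j * k)) • r) = e • R := by
    rcases two (X + t • p) r (-(1 * k)) (-(2 * k)) r0 hr
      (by intro h; apply hk0; linarith) htb with h | h
    · exact ⟨1, le_rfl, h⟩
    · exact ⟨2, by norm_num, h⟩
  have hX' : ¬ ∃ e : ℝ, φ (X + (0 : ℝ) • p + (0 : ℝ) • r) = e • R := by simpa using hX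
  -- `a` is the `p`-coordinate of a common point `(a, k / a)` of the hyperbolas centred at `(0, 0)` and
  -- at `(t, -j k)`; the discriminant is positive because `j, t ≥ 1`.
  obtain ⟨a, ha⟩ : ∃ a : ℝ, j * (a * a) + (-(j * t)) * a + (-t) = 0 :=
    exists_quadratic_eq_zero (by linarith) ⟨√(discrim j (-(j * t)) (-t)), by
      rw [Real.mul_self_sqrt]
      unfold discrim
      nlinarith [mul_nonneg (by linarith : (0 : ℝ) ≤ j) (by linarith : (0 : ℝ) ≤ t)]⟩
  have ha0 : a ≠ 0 := by rintro rfl; nlinarith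
  have hat : a ≠ t := by rintro rfl; nlinarith
  have ht0 : t ≠ 0 := by linarith
  -- Both hyperbolas also have a point with `p`-coordinate `2 t`; these two points differ.
  have E1 := hbad 0 0 (2 * t) (k / (2 * t)) a (k / a) hX'
    (by field_simp; ring) (by field_simp; ring)
  have E2 := hbad t (-(j * k)) (2 * t) (-(j * k) + k / t) a (k / a) hjb (by field_simp; ring) (by
    field_simp
    linear_combination ha)
  have := lineInj ((a0 + 2 * t) • p) r (b0 + k / (2 * t)) (b0 + (-(j * k) + k / t)) r0 hr (by
    intro h
    have h' : k * (1 - 2 * t * j) = 0 := by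
      field_simp at h
      have : k * (1 - 2 * t * j) = 0 := by linear_combination (-1) * h
      exact this
    have := (mul_eq_zero.mp h').resolve_left hk0
    nlinarith)
  exact this (E1.trans E2.symm)

/-! ### Functional equations on the real line -/

/-- A function whose mixed second differences vanish as long as `0` is avoided is additive plus a
constant off `0`. -/
lemma exists_affine_of_four_point {h : ℝ → ℝ}
    (H : ∀ x s t : ℝ, x ≠ 0 → x + s ≠ 0 → x + t ≠ 0 → x + s + t ≠ 0 →
      h (x + s + t) - h (x + s) - h (x + t) + h x = 0) :
    ∃ (η : ℝ →+ ℝ) (γ : ℝ), ∀ x : ℝ, x ≠ 0 → h x = η x + γ := by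
  have G1 : ∀ x y z : ℝ, x ≠ 0 → y ≠ 0 → z ≠ 0 → x + y ≠ 0 → z + y ≠ 0 →
      h x + h y - h (x + y) = h z + h y - h (z + y) := by
    intro x y z hx hy hz hxy hzy
    have := H x y (z - x) hx hxy (by simpa using hz) (by
      have : x + y + (z - x) = z + y := by ring
      rwa [this])
    have e1 : x + y + (z - x) = z + y := by ring
    have e2 : x + (z - x) = z := by ring
    rw [e1, e2] at this
    linarith
  have G2 : ∀ x y : ℝ, x ≠ 0 → y ≠ 0 → x + y ≠ 0 →
      h (x + y) = h x + h y - (2 * h 1 - h 2) := by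
    intro x y hx hy hxy
    obtain ⟨z, hz⟩ := (Set.toFinite ({0, -y, -1} : Set ℝ)).exists_notMem
    simp only [Set.mem_insert_iff, Set.mem_singleton_iff, not_or] at hz
    obtain ⟨z0, zy, z1⟩ := hz
    have zy' : z + y ≠ 0 := fun h => zy (by linarith)
    have z1' : z + 1 ≠ 0 := fun h => z1 (by linarith)
    have a1 := G1 x y z hx hy z0 hxy zy'
    have a2 := G1 y z 1 hy z0 one_ne_zero (by rwa [add_comm]) (by rwa [add_comm])
    have a3 := G1 z 1 1 z0 one_ne_zero one_ne_zero z1' (by norm_num)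
    rw [add_comm y z, add_comm 1 z] at a2
    have : (1 : ℝ) + 1 = 2 := by norm_num
    rw [this] at a3
    linarith
  obtain ⟨γ, hγ⟩ : ∃ γ : ℝ, γ = 2 * h 1 - h 2 := ⟨_, rfl⟩
  rw [← hγ] at G2
  let η : ℝ → ℝ := fun x => if x = 0 then 0 else h x - γ
  have η0 : η 0 = 0 := by simp [η]
  have ηx : ∀ x, x ≠ 0 → η x = h x - γ := fun x hx => by simp [η, hx]
  have hadd' : ∀ x y, x ≠ 0 → y ≠ 0 → x + y ≠ 0 → η (x + y) = η x + η y := by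
    intro x y hx hy hxy
    rw [ηx _ hx, ηx _ hy, ηx _ hxy, G2 x y hx hy hxy]; ring
  have hadd : ∀ x y, η (x + y) = η x + η y := by
    intro x y
    by_cases hx : x = 0
    · simp [hx, η0]
    by_cases hy : y = 0
    · simp [hy, η0]
    by_cases hxy : x + y = 0
    · obtain rfl : y = -x := by linarith
      have h1 := hadd' x x hx hx (by intro h; apply hx; linarith)
      have h2 := hadd' (x + x) (-x) (by intro h; apply hx; linarith) hy (by simpa using hx)
      rw [add_neg_cancel_right] at h2
      rw [hxy, η0]; linarith
    · exact hadd' x y hx hy hxy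
  refine ⟨⟨⟨η, η0⟩, hadd⟩, γ, fun x hx => ?_⟩
  show h x = η x + γ
  rw [ηx x hx]; ring

lemma additive_linear_of_nonneg (η : ℝ →+ ℝ) (h : ∀ x, 0 ≤ x → 0 ≤ η x) (x : ℝ) :
    η x = η 1 * x := by
  have mono : ∀ x y, x ≤ y → η x ≤ η y := by
    intro x y hxy
    have := h (y - x) (by linarith)
    rw [map_sub] at this; linarith
  have hrat : ∀ r : ℚ, η (r : ℝ) = η 1 * r := by
    intro r
    have := map_ratCast_smul η ℝ ℝ r (1 : ℝ)
    simp at this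
    rw [this]; ring
  have h1 : 0 ≤ η 1 := h 1 zero_le_one
  rcases h1.eq_or_lt with h1 | h1
  · obtain ⟨n, hn⟩ := exists_rat_gt x
    obtain ⟨m, hm⟩ := exists_rat_lt x
    have a := mono _ _ hn.le
    have b := mono _ _ hm.le
    rw [hrat, ← h1] at a b
    rw [← h1]; linarith
  · apply le_antisymm
    · by_contra hc
      push Not at hc
      obtain ⟨r, hr1, hr2⟩ := exists_rat_btwn ((lt_div_iff₀' h1).mpr hc)
      have := mono _ _ hr1.le
      rw [hrat] at this
      have := (lt_div_iff₀' h1).mp hr2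
      linarith
    · by_contra hc
      push Not at hc
      obtain ⟨r, hr1, hr2⟩ := exists_rat_btwn ((div_lt_iff₀' h1).mpr hc)
      have := mono _ _ hr2.le
      rw [hrat] at this
      have := (div_lt_iff₀' h1).mp hr1
      linarith

/-! ### Inversion and the transfer functions -/

/-- Inversion in the quadratic form; in matrices this is `A ↦ adj(A⁻¹)`. It is only used where
`q v ≠ 0`. -/
noncomputable def inv (v : V) : V := (q v)⁻¹ • v

lemma q_inv {v : V} (h : q v ≠ 0) : q (inv v) = (q v)⁻¹ := by
  rw [inv, q_smul]; field_simp

lemma inv_inv {v : V} (h : q v ≠ 0) : inv (inv v) = v := by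
  rw [inv, q_inv h, inv, smul_smul]; simp [h]

/-- Inversion preserves adjacency of invertible points. -/
lemma q_inv_sub {v w : V} (hv : q v ≠ 0) (hw : q w ≠ 0) :
    q (inv v - inv w) = q (v - w) / (q v * q w) := by
  rw [q_sub, q_inv hv, q_inv hw, q_sub, inv, inv, b_smul_left, b_smul_right]
  field_simp
  ring

/-- Unless the image lies on a single light line, `φ` preserves non-adjacency. If `x, y` are not adjacent
and their images are, take `c` adjacent to both: the light lines from `c` to `x` and to `y` are sent
into the same light line, and `degenerate` applies. -/
lemma nonadj_of_nondegenerate {φ : V → V} (hφ : Preserves φ)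
    (hnd : ¬ ∃ S R : V, R ≠ 0 ∧ q R = 0 ∧ ∀ X, ∃ t : ℝ, φ X = t • R + S) (x y : V)
    (hxy : q (x - y) ≠ 0) : q (φ x - φ y) ≠ 0 := by
  intro hq
  have hd : x - y ≠ 0 := by intro h; rw [h] at hxy; exact hxy q_zero
  obtain ⟨n, n0, hn, hb⟩ := exists_null {x - y} (Set.finite_singleton _) (by simpa using hd)
  replace hb : b (x - y) n ≠ 0 := hb _ rfl
  -- The multiple of `n` for which `y + p` is adjacent to `x`.
  obtain ⟨p, hp⟩ : ∃ p : V, p = (q (x - y) / b (x - y) n) • n := ⟨_, rfl⟩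
  obtain ⟨c, hc⟩ : ∃ c : V, c = y + p := ⟨_, rfl⟩
  have hqp : q (y - c) = 0 := by
    rw [hc, sub_add_cancel_left, q_neg, hp, q_smul, hn, mul_zero]
  have hqp' : q p = 0 := by rw [hp, q_smul, hn, mul_zero]
  have hbp : b (x - y) p = q (x - y) := by rw [hp, b_smul_right]; field_simp
  have hqr : q (x - c) = 0 := by
    rw [hc, ← sub_sub, q_sub, hbp, hqp']; ring
  have hpr : b (y - c) (x - c) ≠ 0 := by
    have := q_sub (x - c) (y - c)
    rw [sub_sub_sub_cancel_right, hqr, hqp] at this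
    rw [b_comm]
    intro h; rw [h] at this; apply hxy; rw [this]; ring
  have hyc : y ≠ c := by rintro h; rw [h, sub_self, b_zero_left] at hpr; exact hpr rfl
  have hxc : x ≠ c := by rintro h; rw [h, sub_self, b_zero_right] at hpr; exact hpr rfl
  obtain ⟨hy1, hy2⟩ := hφ _ _ hyc hqp
  obtain ⟨hx1, hx2⟩ := hφ _ _ hxc hqr
  obtain ⟨s, hs⟩ := exists_smul_of_orth (w := φ x - φ c) (sub_ne_zero.mpr hy1) hy2 (by
    have := q_sub (φ x - φ c) (φ y - φ c)
    rw [sub_sub_sub_cancel_right, hq, hx2, hy2] at this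
    rw [b_comm]; linarith) hx2
  have hφ' : Preserves (fun v => φ (c + v) - φ c) := by
    intro u v huv hquv
    have := hφ (c + u) (c + v) (by simpa using huv) (by simpa using hquv)
    simpa using this
  refine hnd ⟨φ c, φ y - φ c, sub_ne_zero.mpr hy1, hy2, fun X => ?_⟩
  obtain ⟨t, ht⟩ := degenerate hφ' (by simp) hqp hqr hpr (sub_ne_zero.mpr hy1) hy2
    (x := 1) (y := s) (by simp) (by simpa using hs) (X - c)
  refine ⟨t, ?_⟩
  rw [← ht]; simp

/-- Let `ψ a = inv (φ (inv a))`. For null `p`, the pairing of `ψ a` with `φ p` depends only on the pairing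
of `a` with `p`: the point of the light line `ℝ • p` adjacent to `inv a` is `(b p a)⁻¹ • p`, and `φ`
sends it to the point of `ℝ • φ p` adjacent to `φ (inv a)`. -/
lemma exists_transfer {φ : V → V} (hφ : Preserves φ) (h0 : φ 0 = 0)
    (hn : ∀ x y : V, q (x - y) ≠ 0 → q (φ x - φ y) ≠ 0) {p : V} (hp0 : p ≠ 0) (hp : q p = 0) :
    ∃ h : ℝ → ℝ, (∀ x y, x ≠ 0 → y ≠ 0 → h x = h y → x = y) ∧ (∀ x, x ≠ 0 → h x ≠ 0) ∧
      ∀ a, q a ≠ 0 → b p a ≠ 0 → b (φ p) (inv (φ (inv a))) = h (b p a) := by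
  have hP := hφ p 0 hp0 (by simpa using hp)
  rw [h0, sub_zero] at hP
  have inj : ∀ s t : ℝ, s ≠ t → φ (s • p) ≠ φ (t • p) ∧ q (φ (s • p) - φ (t • p)) = 0 := by
    intro s t hst
    refine hφ _ _ (fun h => hst (smul_left_injective ℝ hp0 h)) ?_
    rw [← sub_smul, q_smul, hp, mul_zero]
  have hf : ∀ t : ℝ, ∃ s : ℝ, φ (t • p) = s • φ p := by
    intro t
    by_cases ht0 : t = 0
    · exact ⟨0, by simp [ht0, h0]⟩
    by_cases ht1 : t = 1
    · exact ⟨1, by simp [ht1]⟩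
    refine exists_smul_of_three hP.1 hP.2 (zero_ne_one (α := ℝ)) ?_ ?_
    · simpa [h0] using (inj t 0 ht0).2
    · simpa using (inj t 1 ht1).2
  choose f hf using hf
  have finj : ∀ s t, f s = f t → s = t := by
    intro s t h
    by_contra hst
    exact (inj s t hst).1 (by rw [hf, hf, h])
  have f0 : f 0 = 0 := by
    have := hf 0
    rw [zero_smul, h0] at this
    exact (smul_eq_zero.mp this.symm).resolve_right hP.1
  have fne : ∀ t, t ≠ 0 → f t ≠ 0 := fun t ht h => ht (finj _ _ (h.trans f0.symm))
  refine ⟨fun x => (f x⁻¹)⁻¹, ?_, ?_, ?_⟩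
  · intro x y hx hy h
    exact inv_injective (finj _ _ (inv_injective h))
  · intro x hx
    exact inv_ne_zero (fne _ (inv_ne_zero hx))
  · intro a ha hb
    have hA : q (inv a) ≠ 0 := by rw [q_inv ha]; exact inv_ne_zero ha
    have hA' : q (φ (inv a)) ≠ 0 := by
      have := hn (inv a) 0 (by simpa using hA)
      simpa [h0] using this
    have hadj := (hφ ((b p a)⁻¹ • p) (inv a) (by
      intro h; apply hA; rw [← h, q_smul, hp, mul_zero]) (by
      rw [q_sub, q_smul, hp, q_inv ha, inv, b_smul_left, b_smul_right]; field_simp; ring)).2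
    rw [hf, q_sub, q_smul, hP.2, b_smul_left] at hadj
    have := fne _ (inv_ne_zero hb)
    show b (φ p) (inv (φ (inv a))) = (f (b p a)⁻¹)⁻¹
    rw [inv, b_smul_right]
    generalize f (b p a)⁻¹ = F at *
    field_simp
    linarith

/-! ### The null frame and the relation between its images -/

/-- Five pairwise non-orthogonal null vectors, any four of which are linearly independent. -/
def frame : Fin 5 → V :=
  ![![1, 0, 0, 0], ![0, 1, 0, 0], ![1, 1, 1, 0], ![1, 1, 0, 1], ![1, 2, -1, -1]]

/-- The coefficients of the linear relation `∑ i, coef i • frame i = 0`. -/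
def coef : Fin 5 → ℝ := ![3, 4, -1, -1, -1]

lemma coef_ne (i : Fin 5) : coef i ≠ 0 := by fin_cases i <;> norm_num [coef]

lemma q_frame (i : Fin 5) : q (frame i) = 0 := by
  fin_cases i <;> simp [frame, q] <;> norm_num

lemma frame_ne (i : Fin 5) : frame i ≠ 0 := by
  intro h
  have h0 := congrFun h 0
  have h1 := congrFun h 1
  fin_cases i <;> simp [frame] at h0 h1

lemma b_frame_ne {i j : Fin 5} (hij : i ≠ j) : b (frame i) (frame j) ≠ 0 := by
  fin_cases i <;> fin_cases j <;> first | exact absurd rfl hij | (simp [frame, b] <;> norm_num)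

/-- The pairings with the frame can be prescribed, subject to the one relation `coef`. -/
lemma exists_coords (x : Fin 5 → ℝ) (hx : ∑ i, coef i * x i = 0) :
    ∃ d : V, ∀ i, b (frame i) d = x i := by
  refine ⟨![x 1, x 0, (x 0 + x 1 - x 2) / 2, (x 0 + x 1 - x 3) / 2], fun i => ?_⟩
  simp [Fin.sum_univ_five, coef] at hx
  fin_cases i <;> simp [frame, b]
  · ring
  · ring
  · linarith

/-- Directions in which only two frame pairings vary. -/
lemma exists_dir {l j : Fin 5} (hlj : l ≠ j) : ∃ d : V, b (frame l) d = 1 ∧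
    b (frame j) d = -(coef l / coef j) ∧ ∀ m, m ≠ l → m ≠ j → b (frame m) d = 0 := by
  have hj := coef_ne j
  obtain ⟨d, hd⟩ := exists_coords (fun m => if m = l then 1 else if m = j then
    -(coef l / coef j) else 0) (by
    rw [← Finset.add_sum_erase _ _ (Finset.mem_univ l),
      ← Finset.add_sum_erase _ _ (Finset.mem_erase.mpr ⟨hlj.symm, Finset.mem_univ j⟩),
      Finset.sum_eq_zero]
    · simp [hlj.symm]; field_simp; ring
    · intro m hm
      simp only [Finset.mem_erase] at hm
      simp [hm.1, hm.2.1])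
  refine ⟨d, ?_, ?_, ?_⟩
  · simp [hd]
  · simp [hd, hlj.symm]
  · intro m h1 h2; simp [hd, h1, h2]

/-- Points that are invertible and orthogonal to no frame vector: all the pairings `b (frame i)` of
such a point are governed by `exists_transfer`. -/
def Good (a : V) : Prop := q a ≠ 0 ∧ ∀ i, b (frame i) a ≠ 0

lemma eventually_ne (α β : ℝ) (hβ : β ≠ 0) : ∀ᶠ N : ℝ in Filter.atTop, α + N * β ≠ 0 := by
  filter_upwards [Filter.eventually_gt_atTop (-α / β)] with N hN h
  apply hN.ne'
  field_simp; linarith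

lemma eventually_good_of_null {n a : V} (hn : q n = 0) (ha : b n a ≠ 0)
    (h : ∀ i, b (frame i) n ≠ 0 ∨ b (frame i) n = 0 ∧ b (frame i) a ≠ 0) :
    ∀ᶠ N : ℝ in Filter.atTop, Good (a + N • n) := by
  have h1 : ∀ i, ∀ᶠ N : ℝ in Filter.atTop, b (frame i) (a + N • n) ≠ 0 := by
    intro i
    rcases h i with h | ⟨h, h'⟩
    · filter_upwards [eventually_ne (b (frame i) a) _ h] with N hN
      rwa [b_add_right, b_smul_right]
    · filter_upwards with N
      rwa [b_add_right, b_smul_right, h, mul_zero, add_zero]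
  filter_upwards [Filter.eventually_all.mpr h1, eventually_ne (q a) _ ha] with N hN1 hN2
  refine ⟨?_, hN1⟩
  rwa [q_add, q_smul, hn, b_smul_right, b_comm a n, mul_zero, add_zero]

/-- Adding a large multiple of `frame l` makes a point good without changing its pairing with
`frame l`. -/
lemma eventually_good {l : Fin 5} {a : V} (ha : b (frame l) a ≠ 0) :
    ∀ᶠ N : ℝ in Filter.atTop, Good (a + N • frame l) := by
  refine eventually_good_of_null (q_frame l) ha fun i => ?_
  by_cases hi : i = l
  · right; subst hi; exact ⟨by rw [b_self, q_frame, mul_zero], ha⟩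
  · left; exact b_frame_ne hi

/-- A nontrivial relation between the images `P i` of the frame vectors has no vanishing coefficient:
if `c j = 0`, moving in a direction that changes only the pairings `l` and `j` contradicts the
injectivity of `h l`. -/
lemma relation_ne_zero {P : Fin 5 → V} {ψ : V → V} {h : Fin 5 → ℝ → ℝ}
    (hinj : ∀ i x y, x ≠ 0 → y ≠ 0 → h i x = h i y → x = y)
    (hψ : ∀ i a, Good a → b (P i) (ψ a) = h i (b (frame i) a))
    {c : Fin 5 → ℝ} (hc : ∀ w, ∑ i, c i * b (P i) w = 0) {l : Fin 5} (hl : c l ≠ 0) (j : Fin 5) :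
    c j ≠ 0 := by
  intro hj
  have hlj : l ≠ j := by rintro rfl; exact hl hj
  obtain ⟨d, d1, -, d3⟩ := exists_dir hlj
  obtain ⟨N, g1, g2⟩ := ((eventually_good (l := l) (a := d) (by rw [d1]; exact one_ne_zero)).and
    (eventually_good (l := l) (a := (2 : ℝ) • d) (by rw [b_smul_right, d1]; norm_num))).exists
  have e := hc (ψ (d + N • frame l) - ψ ((2 : ℝ) • d + N • frame l))
  rw [Finset.sum_eq_single l] at e
  · have e' := (mul_eq_zero.mp e).resolve_left hl
    rw [b_sub_right, hψ _ _ g1, hψ _ _ g2, sub_eq_zero] at e'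
    have := hinj _ _ _ (g1.2 l) (g2.2 l) e'
    simp only [b_add_right, b_smul_right, d1] at this
    linarith
  · intro m _ hm
    by_cases hmj : m = j
    · rw [hmj, hj, zero_mul]
    · rw [b_sub_right, hψ _ _ g1, hψ _ _ g2]
      simp only [b_add_right, b_smul_right, d3 m hm hmj, mul_zero, sub_self]
  · simp

/-- The mixed second difference of `ψ` in a direction changing only the pairings `l, i` and a direction
changing only `l, j` pairs to zero with every `P m`, `m ≠ l`; the relation between the `P m` then gives
the same for `m = l`. -/
lemma four_point {P : Fin 5 → V} {ψ : V → V} {h : Fin 5 → ℝ → ℝ}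
    (hψ : ∀ i a, Good a → b (P i) (ψ a) = h i (b (frame i) a))
    {c : Fin 5 → ℝ} (hc : ∀ w, ∑ i, c i * b (P i) w = 0) {l : Fin 5} (hl : c l ≠ 0)
    (x s t : ℝ) (h1 : x ≠ 0) (h2 : x + s ≠ 0) (h3 : x + t ≠ 0) (h4 : x + s + t ≠ 0) :
    h l (x + s + t) - h l (x + s) - h l (x + t) + h l x = 0 := by
  obtain ⟨i, j, hli, hlj, hij⟩ : ∃ i j : Fin 5, l ≠ i ∧ l ≠ j ∧ i ≠ j :=
    (by decide : ∀ l : Fin 5, ∃ i j : Fin 5, l ≠ i ∧ l ≠ j ∧ i ≠ j) l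
  obtain ⟨d, d1, -, d3⟩ := exists_dir hli
  obtain ⟨e, e1, -, e3⟩ := exists_dir hlj
  obtain ⟨N, ⟨g1, g2⟩, g3, g4⟩ := (((eventually_good (l := l) (a := x • d)
      (by simpa [b_smul_right, d1] using h1)).and
    (eventually_good (l := l) (a := x • d + s • d)
      (by simpa [b_add_right, b_smul_right, d1] using h2))).and
    ((eventually_good (l := l) (a := x • d + t • e)
      (by simpa [b_add_right, b_smul_right, d1, e1] using h3)).and
    (eventually_good (l := l) (a := x • d + s • d + t • e)
      (by simpa [b_add_right, b_smul_right, d1, e1] using h4)))).exists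
  have E := hc (ψ (x • d + s • d + t • e + N • frame l) - ψ (x • d + s • d + N • frame l)
    - ψ (x • d + t • e + N • frame l) + ψ (x • d + N • frame l))
  rw [Finset.sum_eq_single l] at E
  · have E' := (mul_eq_zero.mp E).resolve_left hl
    rw [b_add_right, b_sub_right, b_sub_right, hψ _ _ g1, hψ _ _ g2, hψ _ _ g3, hψ _ _ g4] at E'
    simpa only [b_add_right, b_smul_right, d1, e1, b_self, q_frame, mul_zero, mul_one,
      add_zero] using E'
  · intro m _ hm
    rw [b_add_right, b_sub_right, b_sub_right, hψ _ _ g1, hψ _ _ g2, hψ _ _ g3, hψ _ _ g4]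
    by_cases hmj : m = j
    · have : m ≠ i := by rw [hmj]; exact hij.symm
      simp only [b_add_right, b_smul_right, d3 m hm this, mul_zero, add_zero, zero_add]
      ring
    · simp only [b_add_right, b_smul_right, e3 m hm hmj, mul_zero, add_zero]
      ring
  · simp

/-- The additive parts `η i` are all proportional to each other up to scaling the argument. -/
lemma slopes_related {P : Fin 5 → V} {ψ : V → V} {h : Fin 5 → ℝ → ℝ}
    (hψ : ∀ i a, Good a → b (P i) (ψ a) = h i (b (frame i) a))
    {c : Fin 5 → ℝ} (hc : ∀ w, ∑ i, c i * b (P i) w = 0)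
    {η : Fin 5 → ℝ →+ ℝ} {γ : Fin 5 → ℝ} (hη : ∀ i x, x ≠ 0 → h i x = η i x + γ i)
    {l j : Fin 5} (hlj : l ≠ j) (x : ℝ) :
    c l * η l x + c j * η j (-(coef l / coef j) * x) = 0 := by
  obtain ⟨d, d1, d2, d3⟩ := exists_dir hlj
  obtain ⟨y, hy⟩ := (Set.toFinite ({0, -x} : Set ℝ)).exists_notMem
  simp only [Set.mem_insert_iff, Set.mem_singleton_iff, not_or] at hy
  obtain ⟨N, g1, g2⟩ := ((eventually_good (l := l) (a := y • d)
      (by simpa [b_smul_right, d1] using hy.1)).and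
    (eventually_good (l := l) (a := y • d + x • d)
      (by simp only [b_add_right, b_smul_right, d1]; intro h; apply hy.2; linarith))).exists
  have E := hc (ψ (y • d + x • d + N • frame l) - ψ (y • d + N • frame l))
  have T : ∀ m, b (P m) (ψ (y • d + x • d + N • frame l) - ψ (y • d + N • frame l))
      = η m (x * b (frame m) d) := by
    intro m
    rw [b_sub_right, hψ _ _ g1, hψ _ _ g2, hη _ _ (g1.2 m), hη _ _ (g2.2 m)]
    simp only [b_add_right, b_smul_right, map_add]
    ring
  simp only [T] at E
  rw [← Finset.add_sum_erase _ _ (Finset.mem_univ l),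
      ← Finset.add_sum_erase _ _ (Finset.mem_erase.mpr ⟨hlj.symm, Finset.mem_univ j⟩),
      Finset.sum_eq_zero] at E
  · rw [d1, d2, mul_one, add_zero, mul_comm x] at E; exact E
  · intro m hm
    simp only [Finset.mem_erase] at hm
    rw [d3 m hm.2.1 hm.1, mul_zero, map_zero, mul_zero]

/-- For null `v`, the numbers `η i (b (frame i) v)` are the pairings of a null vector, an increment
of `ψ` along `v`. -/
lemma exists_increment {P : Fin 5 → V} {ψ : V → V} {h : Fin 5 → ℝ → ℝ}
    (hψ : ∀ i a, Good a → b (P i) (ψ a) = h i (b (frame i) a))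
    (hnull : ∀ a a', q a ≠ 0 → q a' ≠ 0 → q (a - a') = 0 → q (ψ a - ψ a') = 0)
    {η : Fin 5 → ℝ →+ ℝ} {γ : Fin 5 → ℝ} (hη : ∀ i x, x ≠ 0 → h i x = η i x + γ i)
    (v : V) (hv : q v = 0) : ∃ w, q w = 0 ∧ ∀ i, b (P i) w = η i (b (frame i) v) := by
  obtain ⟨d, d1, -, -⟩ := exists_dir (l := 0) (j := 1) (by decide)
  obtain ⟨y, hy⟩ := (Set.toFinite ({0, -b (frame 0) v} : Set ℝ)).exists_notMem
  simp only [Set.mem_insert_iff, Set.mem_singleton_iff, not_or] at hy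
  obtain ⟨N, g1, g2⟩ := ((eventually_good (l := 0) (a := y • d)
      (by simpa [b_smul_right, d1] using hy.1)).and
    (eventually_good (l := 0) (a := y • d + v)
      (by simp only [b_add_right, b_smul_right, d1]; intro h; apply hy.2; linarith))).exists
  refine ⟨ψ (y • d + v + N • frame 0) - ψ (y • d + N • frame 0), ?_, fun i => ?_⟩
  · refine hnull _ _ g2.1 g1.1 ?_
    have : y • d + v + N • frame 0 - (y • d + N • frame 0) = v := by abel
    rwa [this]
  · rw [b_sub_right, hψ _ _ g1, hψ _ _ g2, hη _ _ (g1.2 i), hη _ _ (g2.2 i)]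
    simp only [b_add_right, b_smul_right, map_add]
    ring

/-! ### Linearity of nondegenerate maps -/

lemma eq_zero_of_frame {v : V} (h : ∀ i : Fin 4, b (frame i.castSucc) v = 0) : v = 0 := by
  have h0 := h 0
  have h1 := h 1
  have h2 := h 2
  have h3 := h 3
  simp [frame, b] at h0 h1 h2 h3
  ext i
  fin_cases i
  · simpa using h1
  · simpa using h0
  · simp; linarith
  · simp; linarith

/-- A linear map preserving the null cone is a similarity for `q`: the coefficients of `q ∘ L` are
read off at nine null vectors. -/
lemma exists_eq_smul_q (L : V →ₗ[ℝ] V) (hL : ∀ v, q v = 0 → q (L v) = 0) :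
    ∃ κ : ℝ, ∀ v, q (L v) = κ * q v := by
  obtain ⟨e0, he0⟩ : ∃ e : V, e = L ![1, 0, 0, 0] := ⟨_, rfl⟩
  obtain ⟨e1, he1⟩ : ∃ e : V, e = L ![0, 1, 0, 0] := ⟨_, rfl⟩
  obtain ⟨e2, he2⟩ : ∃ e : V, e = L ![0, 0, 1, 0] := ⟨_, rfl⟩
  obtain ⟨e3, he3⟩ : ∃ e : V, e = L ![0, 0, 0, 1] := ⟨_, rfl⟩
  have hLv : ∀ v : V, L v = v 0 • e0 + v 1 • e1 + v 2 • e2 + v 3 • e3 := by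
    intro v
    rw [he0, he1, he2, he3, ← map_smul, ← map_smul, ← map_smul, ← map_smul, ← map_add, ← map_add,
      ← map_add]
    congr 1
    ext i; fin_cases i <;> simp
  have hQ : ∀ v : V, q (L v) = v 0 ^ 2 * q e0 + v 1 ^ 2 * q e1 + v 2 ^ 2 * q e2 + v 3 ^ 2 * q e3
      + v 0 * v 1 * b e0 e1 + v 0 * v 2 * b e0 e2 + v 0 * v 3 * b e0 e3 + v 1 * v 2 * b e1 e2
      + v 1 * v 3 * b e1 e3 + v 2 * v 3 * b e2 e3 := by
    intro v
    rw [hLv]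
    simp only [q_add, q_smul, b_add_left, b_smul_left, b_smul_right]
    ring
  have T : ∀ x y u w : ℝ, x * y = u ^ 2 + w ^ 2 → x ^ 2 * q e0 + y ^ 2 * q e1 + u ^ 2 * q e2
      + w ^ 2 * q e3
      + x * y * b e0 e1 + x * u * b e0 e2 + x * w * b e0 e3 + y * u * b e1 e2
      + y * w * b e1 e3 + u * w * b e2 e3 = 0 := by
    intro x y u w h
    have := hL ![x, y, u, w] (by simp [q]; linarith)
    rw [hQ] at this
    simpa using this
  have t1 := T 1 0 0 0 (by norm_num)
  have t2 := T 0 1 0 0 (by norm_num)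
  have t3 := T 1 1 1 0 (by norm_num)
  have t4 := T 1 1 (-1) 0 (by norm_num)
  have t5 := T 1 1 0 1 (by norm_num)
  have t6 := T 1 1 0 (-1) (by norm_num)
  have t7 := T 4 1 2 0 (by norm_num)
  have t8 := T 4 1 0 2 (by norm_num)
  have t9 := T 2 1 1 1 (by norm_num)
  have a0 : q e0 = 0 := by linarith
  have a1 : q e1 = 0 := by linarith
  have a2 : q e2 = - b e0 e1 := by linarith
  have a3 : q e3 = - b e0 e1 := by linarith
  have a4 : b e0 e2 = 0 := by linarith
  have a5 : b e0 e3 = 0 := by linarith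
  have a6 : b e1 e2 = 0 := by linarith
  have a7 : b e1 e3 = 0 := by linarith
  have a8 : b e2 e3 = 0 := by linarith
  refine ⟨b e0 e1, fun v => ?_⟩
  rw [hQ, a0, a1, a2, a3, a4, a5, a6, a7, a8, q]
  ring

/-- The linear functional `b p`. -/
def bLeft (p : V) : V →ₗ[ℝ] ℝ where
  toFun := b p
  map_add' := b_add_right p
  map_smul' t v := b_smul_right t p v

/-- A map with `φ 0 = 0` preserving adjacency and non-adjacency is a linear similarity for `q`. Its
conjugate `ψ` by inversion is shown to be linear on good points; inverting back gives `φ` on good points,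
and adjacency to good points determines `φ` elsewhere. -/
theorem linear_of_nondegenerate {φ : V → V} (hφ : Preserves φ) (h0 : φ 0 = 0)
    (hn : ∀ x y : V, q (x - y) ≠ 0 → q (φ x - φ y) ≠ 0) :
    ∃ (Λ : V →ₗ[ℝ] V) (κ : ℝ), 0 < κ ∧ (∀ v, q (Λ v) = κ * q v) ∧ ∀ v, φ v = Λ v := by
  choose h hinj hne hψ' using fun i => exists_transfer hφ h0 hn (frame_ne i) (q_frame i)
  obtain ⟨ψ, hψdef⟩ : ∃ ψ : V → V, ψ = fun a => inv (φ (inv a)) := ⟨_, rfl⟩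
  obtain ⟨P, hPdef⟩ : ∃ P : Fin 5 → V, P = fun i => φ (frame i) := ⟨_, rfl⟩
  have hψ : ∀ i a, Good a → b (P i) (ψ a) = h i (b (frame i) a) := by
    intro i a ha
    rw [hψdef, hPdef]
    exact hψ' i a ha.1 (ha.2 i)
  have hqφ : ∀ a, q a ≠ 0 → q (φ a) ≠ 0 := by
    intro a ha
    simpa [h0] using hn a 0 (by simpa using ha)
  have hqφi : ∀ a, q a ≠ 0 → q (φ (inv a)) ≠ 0 := fun a ha =>
    hqφ _ (by rw [q_inv ha]; exact inv_ne_zero ha)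
  have hnull : ∀ a a', q a ≠ 0 → q a' ≠ 0 → q (a - a') = 0 → q (ψ a - ψ a') = 0 := by
    intro a a' ha ha' haa
    rw [hψdef]
    by_cases hE : inv a = inv a'
    · simp [hE, q_zero]
    · have := (hφ _ _ hE (by rw [q_inv_sub ha ha', haa, zero_div])).2
      simp only
      rw [q_inv_sub (hqφi a ha) (hqφi a' ha'), this, zero_div]
  -- Five vectors in a four-dimensional space are dependent.
  obtain ⟨c, hc, l, hl⟩ : ∃ c : Fin 5 → ℝ, (∑ i, c i • P i = 0) ∧ ∃ l, c l ≠ 0 := by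
    have : ¬ LinearIndependent ℝ P := by
      intro hli
      have := hli.fintype_card_le_finrank
      simp at this
    exact Fintype.not_linearIndependent_iff.mp this
  have hrel : ∀ c : Fin 5 → ℝ, (∑ i, c i • P i = 0) → ∀ w, ∑ i, c i * b (P i) w = 0 := by
    intro c hc w
    have := congrArg (bLeft w) hc
    simp only [map_sum, map_smul, map_zero, smul_eq_mul] at this
    rw [← this]
    exact Finset.sum_congr rfl fun i _ => by rw [b_comm]; rfl
  have hcne : ∀ j, c j ≠ 0 := relation_ne_zero hinj hψ (hrel c hc) hl
  -- A relation between the first four, extended by zero, would have a vanishing coefficient.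
  have hli : LinearIndependent ℝ (fun i : Fin 4 => P i.castSucc) := by
    rw [Fintype.linearIndependent_iff]
    intro g hg
    by_contra hcon
    push Not at hcon
    obtain ⟨i, hi⟩ := hcon
    have hs : ∑ i, (Fin.snoc g 0 : Fin 5 → ℝ) i • P i = 0 := by
      rw [Fin.sum_univ_castSucc]
      simp only [Fin.snoc_castSucc, Fin.snoc_last, zero_smul, add_zero]
      exact hg
    refine relation_ne_zero (l := i.castSucc) hinj hψ (hrel _ hs) ?_ (Fin.last 4) ?_
    · rw [Fin.snoc_castSucc (α := fun _ => ℝ)]; exact hi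
    · exact Fin.snoc_last (α := fun _ => ℝ) _ _
  have huniq : ∀ w, (∀ i : Fin 4, b (P i.castSucc) w = 0) → w = 0 := by
    intro w hw
    have hspan := hli.span_eq_top_of_card_eq_finrank (by simp)
    have hle : Submodule.span ℝ (Set.range fun i : Fin 4 => P i.castSucc) ≤
        LinearMap.ker (bLeft w) := by
      rw [Submodule.span_le]
      rintro _ ⟨i, rfl⟩
      show b w _ = 0
      rw [b_comm]; exact hw i
    rw [hspan] at hle
    have hz : ∀ v, b w v = 0 := fun v => hle (Submodule.mem_top (x := v))
    refine eq_zero_of_frame fun i => ?_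
    rw [b_comm]; exact hz _
  -- Each `h i` is additive plus a constant, with injective additive part.
  choose η γ hη using fun i => exists_affine_of_four_point
    (fun x s t h1 h2 h3 h4 => four_point hψ (hrel c hc) (hcne i) x s t h1 h2 h3 h4)
  have ηinj : ∀ i x, η i x = 0 → x = 0 := by
    intro i x hx
    obtain ⟨y, hy⟩ := (Set.toFinite ({0, -x} : Set ℝ)).exists_notMem
    simp only [Set.mem_insert_iff, Set.mem_singleton_iff, not_or] at hy
    have hyx : y + x ≠ 0 := fun h => hy.2 (by linarith)
    have := hinj i (y + x) y hyx hy.1 (by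
      rw [hη _ _ hyx, hη _ _ hy.1, map_add, hx, add_zero])
    linarith
  have hP : ∀ i, q (P i) = 0 := by
    intro i
    have := (hφ (frame i) 0 (frame_ne i) (by simpa using q_frame i)).2
    rw [hPdef]; simpa [h0] using this
  have hβ : b (P 0) (P 1) ≠ 0 := by
    have := hn (frame 0) (frame 1) (by
      rw [q_sub, q_frame, q_frame]; simpa using b_frame_ne (i := 0) (j := 1) (by decide))
    have h' : q (P 0 - P 1) ≠ 0 := by rw [hPdef]; exact this
    rw [q_sub, hP, hP] at h'
    intro h; apply h'; rw [h]; ring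
  -- The half-cone sign rule makes `η 1` monotone, hence linear over `ℝ`.
  have hsign : ∀ x : ℝ, 0 ≤ x → 0 ≤ (η 0 1 * b (P 0) (P 1)) * η 1 x := by
    intro x hx
    obtain ⟨w, hw, hwb⟩ := exists_increment hψ hnull hη ![x, 1, √x, 0] (by
      simp [q, Real.sq_sqrt hx])
    have := null_triple (hP 0) (hP 1) hw
    rw [hwb, hwb] at this
    simp [frame, b] at this
    simp only [b]
    nlinarith [this]
  have hη1 : ∀ x, η 1 x = η 1 1 * x := by
    have hC : η 0 1 * b (P 0) (P 1) ≠ 0 := mul_ne_zero (fun h => one_ne_zero (ηinj 0 1 h)) hβ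
    intro x
    have := additive_linear_of_nonneg ((AddMonoidHom.mulLeft (η 0 1 * b (P 0) (P 1))).comp (η 1))
      (by simpa using hsign) x
    simp only [AddMonoidHom.comp_apply, AddMonoidHom.coe_mulLeft] at this
    rw [mul_assoc (η 0 1 * b (P 0) (P 1))] at this
    exact mul_left_cancel₀ hC this
  have hηlin : ∀ i x, η i x = η i 1 * x := by
    intro i x
    by_cases hi : i = 1
    · rw [hi]; exact hη1 x
    · have r1 := slopes_related hψ (hrel c hc) hη hi x
      have r2 := slopes_related hψ (hrel c hc) hη hi 1
      rw [hη1] at r1 r2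
      have : c i * (η i x - η i 1 * x) = 0 := by linear_combination r1 - x * r2
      exact sub_eq_zero.mp ((mul_eq_zero.mp this).resolve_left (hcne i))
  obtain ⟨e, he⟩ : ∃ e : Fin 5 → ℝ, e = fun i => η i 1 := ⟨_, rfl⟩
  have hene : ∀ i, e i ≠ 0 := by
    intro i h; rw [he] at h; exact one_ne_zero (ηinj i 1 h)
  have hηe : ∀ i x, η i x = e i * x := by intro i x; rw [he]; exact hηlin i x
  -- A nonzero constant term would give `h i` a zero.
  have hγ : ∀ i, γ i = 0 := by
    intro i
    by_contra hg
    have hx : -γ i / e i ≠ 0 := div_ne_zero (neg_ne_zero.mpr hg) (hene i)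
    apply hne i _ hx
    rw [hη i _ hx, hηe]
    have := hene i
    field_simp; ring
  have hψlin : ∀ i a, Good a → b (P i) (ψ a) = e i * b (frame i) a := by
    intro i a ha
    rw [hψ i a ha, hη _ _ (ha.2 i), hγ, add_zero, hηe]
  -- `L` is the linear map with `b (P i) (L v) = e i * b (frame i) v`, which agrees with `ψ` on good
  -- points.
  let T : V →ₗ[ℝ] V := LinearMap.pi fun i : Fin 4 => bLeft (P i.castSucc)
  have hT : ∀ v i, T v i = b (P (Fin.castSucc i)) v := fun v i => rfl
  have Tinj : Function.Injective T := by
    rw [← LinearMap.ker_eq_bot, LinearMap.ker_eq_bot']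
    intro v hv
    exact huniq v fun i => by rw [← hT, hv]; rfl
  let Te : V ≃ₗ[ℝ] V := LinearEquiv.ofInjectiveEndo T Tinj
  let D : V →ₗ[ℝ] V := LinearMap.pi fun i : Fin 4 => e i.castSucc • bLeft (frame i.castSucc)
  have hD : ∀ v i, D v i = e (Fin.castSucc i) * b (frame (Fin.castSucc i)) v := fun v i => rfl
  let L : V →ₗ[ℝ] V := Te.symm.toLinearMap.comp D
  have hL : ∀ v (i : Fin 4), b (P i.castSucc) (L v) = e i.castSucc * b (frame i.castSucc) v := by
    intro v i
    rw [← hT, ← hD]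
    have : T (L v) = D v := Te.apply_symm_apply (D v)
    rw [this]
  have hLeq : ∀ v w, (∀ i : Fin 4, b (P i.castSucc) w = e i.castSucc * b (frame i.castSucc) v) →
      w = L v := by
    intro v w hw
    refine sub_eq_zero.mp (huniq _ fun i => ?_)
    rw [b_sub_right, hw, hL, sub_self]
  have Linj : Function.Injective L := by
    rw [← LinearMap.ker_eq_bot, LinearMap.ker_eq_bot']
    intro v hv
    refine eq_zero_of_frame fun i => ?_
    have := hL v i
    rw [hv, b_zero_right] at this
    exact (mul_eq_zero.mp this.symm).resolve_left (hene _)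
  have Lsurj : Function.Surjective L := LinearMap.injective_iff_surjective.mp Linj
  obtain ⟨κ, hκ⟩ := exists_eq_smul_q L (by
    intro v hv
    obtain ⟨w, hw, hwb⟩ := exists_increment hψ hnull hη v hv
    rw [← hLeq v w fun i => by rw [hwb, hηe]]
    exact hw)
  have hκb : ∀ v w, b (L v) (L w) = κ * b v w := by
    intro v w
    have := q_add (L v) (L w)
    rw [← map_add, hκ, hκ, hκ, q_add] at this
    linarith
  have hκ0 : κ ≠ 0 := by
    rintro rfl
    obtain ⟨v, hv⟩ := Lsurj ![1, 1, 0, 0]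
    have := hκ v
    rw [hv] at this
    simp [q] at this
  have hκpos : 0 < κ := by
    refine lt_of_le_of_ne ?_ hκ0.symm
    have := q_nonpos_of_orth (n := L (frame 0)) (w := L ![0, 0, 1, 0])
      (fun h => frame_ne 0 (Linj (h.trans (map_zero L).symm))) (by rw [hκ, q_frame, mul_zero])
      (by rw [hκb]; simp [frame, b])
    rw [hκ] at this
    simp [q] at this
    exact this
  -- Undo the inversion.
  have hgood : ∀ A, Good A → φ A = κ⁻¹ • L A := by
    intro A hA
    have hq' : q (inv A) ≠ 0 := by rw [q_inv hA.1]; exact inv_ne_zero hA.1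
    have hG : Good (inv A) := ⟨hq', fun i => by
      rw [inv, b_smul_right]; exact mul_ne_zero (inv_ne_zero hA.1) (hA.2 i)⟩
    have e1 : ψ (inv A) = L (inv A) := hLeq _ _ fun i => hψlin _ _ hG
    have e2 : inv (φ A) = L (inv A) := by
      rw [← e1, hψdef]; simp only; rw [inv_inv hA.1]
    rw [← inv_inv (hqφ A hA.1), e2, inv, hκ, q_inv hA.1, inv, map_smul, smul_smul]
    have := hA.1
    congr 1
    field_simp
  refine ⟨κ⁻¹ • L, κ⁻¹, inv_pos.mpr hκpos, fun v => ?_, fun A => ?_⟩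
  · rw [LinearMap.smul_apply, q_smul, hκ]; field_simp
  rw [LinearMap.smul_apply]
  by_cases hA0 : A = 0
  · simp [hA0, h0]
  -- At any `A ≠ 0`, adjacency of `A` to the good points `A + N • n` makes `q` of the defect
  -- `φ A - κ⁻¹ • L A = L W` equal to `N * b W n` for two different values of `N`, where `b W n ≠ 0`.
  by_contra hne'
  obtain ⟨W, hW⟩ := Lsurj (φ A - κ⁻¹ • L A)
  have hW0 : W ≠ 0 := by
    rintro rfl
    rw [map_zero] at hW
    exact hne' (sub_eq_zero.mp hW.symm)
  obtain ⟨n, n0, hqn, hbn⟩ := exists_null ({A, W} ∪ Set.range frame) (Set.toFinite _) (by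
    rintro v ((rfl | rfl) | ⟨i, rfl⟩)
    · exact hA0
    · exact hW0
    · exact frame_ne i)
  have hbA : b A n ≠ 0 := hbn _ (by simp)
  have hbW : b W n ≠ 0 := hbn _ (by simp)
  have hbf : ∀ i, b (frame i) n ≠ 0 := fun i => hbn _ (by simp)
  have ev : ∀ᶠ N : ℝ in Filter.atTop, Good (A + N • n) :=
    eventually_good_of_null hqn (by rw [b_comm]; exact hbA) fun i => Or.inl (hbf i)
  have key : ∀ N : ℝ, N ≠ 0 → Good (A + N • n) →
      q (φ A - κ⁻¹ • L A) = N * (κ⁻¹ * (κ * b W n)) := by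
    intro N hN hG
    have h1 := (hφ A (A + N • n) (by simp [hN, n0]) (by
      rw [sub_add_cancel_left, q_neg, q_smul, hqn, mul_zero])).2
    rw [hgood _ hG, map_add, smul_add, ← sub_sub, ← hW, q_sub, q_smul, hκ (N • n), q_smul, hqn,
      b_smul_right, hκb, b_smul_right] at h1
    rw [← hW]; linarith
  obtain ⟨N, hN, hNG⟩ := ((Filter.eventually_gt_atTop 0).and ev).exists
  obtain ⟨M, hM, hMG⟩ := ((Filter.eventually_gt_atTop N).and ev).exists
  have k1 := key N hN.ne' hNG
  have k2 := key M (hN.trans hM).ne' hMG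
  rw [k1] at k2
  have := mul_right_cancel₀ (mul_ne_zero (inv_ne_zero hκ0) (mul_ne_zero hκ0 hbW)) k2
  exact hM.ne this

/-! ### Hermitian matrices in coordinates -/

/-- The hermitian matrix with coordinates `v`. -/
def toM (v : V) : Matrix (Fin 2) (Fin 2) ℂ :=
  !![(v 0 : ℂ), ⟨v 2, v 3⟩; ⟨v 2, -v 3⟩, (v 1 : ℂ)]

/-- The coordinates of a hermitian matrix; inverse to `toM` on hermitian matrices. -/
def toV (A : Matrix (Fin 2) (Fin 2) ℂ) : V :=
  ![(A 0 0).re, (A 1 1).re, (A 0 1).re, (A 0 1).im]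

lemma toV_toM (v : V) : toV (toM v) = v := by
  ext i; fin_cases i <;> simp [toM, toV]

lemma toM_toV {A : Matrix (Fin 2) (Fin 2) ℂ} (hA : A.IsHermitian) : toM (toV A) = A := by
  have h00 := congrArg Complex.im (hA.apply 0 0)
  have h11 := congrArg Complex.im (hA.apply 1 1)
  have h01 := hA.apply 1 0
  simp at h00 h11
  ext i j
  fin_cases i <;> fin_cases j <;> simp [toM, toV, Complex.ext_iff, ← h01] <;> linarith

lemma toM_isHermitian (v : V) : (toM v).IsHermitian := by
  ext i j
  fin_cases i <;> fin_cases j <;> simp [toM, Complex.ext_iff]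

lemma toM_sub (v w : V) : toM (v - w) = toM v - toM w := by
  ext i j
  fin_cases i <;> fin_cases j <;> simp [toM, Complex.ext_iff]; ring

lemma toM_add (v w : V) : toM (v + w) = toM v + toM w := by
  ext i j
  fin_cases i <;> fin_cases j <;> simp [toM, Complex.ext_iff]; ring

lemma toM_smul (t : ℝ) (v : V) : toM (t • v) = (t : ℂ) • toM v := by
  ext i j
  fin_cases i <;> fin_cases j <;> simp [toM, Complex.ext_iff]

lemma toM_zero : toM 0 = 0 := by
  ext i j
  fin_cases i <;> fin_cases j <;> simp [toM, Complex.ext_iff]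

lemma toM_injective {v w : V} (h : toM v = toM w) : v = w := by
  rw [← toV_toM v, h, toV_toM]

lemma det_toM (v : V) : (toM v).det = q v := by
  rw [Complex.ext_iff, Complex.ofReal_re, Complex.ofReal_im, q]
  simp [toM, Matrix.det_fin_two]
  constructor <;> ring

/-- Rank one means null and nonzero. -/
lemma rank_toM (v : V) : (toM v).rank = 1 ↔ v ≠ 0 ∧ q v = 0 := by
  have h0 : (toM v).rank = 0 ↔ v = 0 := by
    constructor
    · intro h
      rw [Matrix.rank, Submodule.finrank_eq_zero, LinearMap.range_eq_bot] at h
      have hz : toM v = 0 := Matrix.toLin'.injective (by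
        rw [Matrix.toLin'_apply', h, map_zero])
      exact toM_injective (hz.trans toM_zero.symm)
    · rintro rfl; rw [toM_zero, Matrix.rank_zero]
  have h2 : (toM v).rank = 2 ↔ q v ≠ 0 := by
    constructor
    · intro h hq
      have hd : (toM v).det = 0 := by rw [det_toM, hq]; simp
      obtain ⟨x, hx0, hx⟩ := Matrix.exists_mulVec_eq_zero_iff.mpr hd
      have hr := LinearMap.finrank_range_add_finrank_ker (toM v).mulVecLin
      rw [← Matrix.rank, h] at hr
      simp at hr
      exact hx0 (by simpa [hr] using (show x ∈ LinearMap.ker (toM v).mulVecLin from hx))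
    · intro h
      rw [Matrix.rank_of_isUnit _ ((Matrix.isUnit_iff_isUnit_det _).mpr _)]
      · simp
      · rw [det_toM]; simpa using h
  have hle : (toM v).rank ≤ 2 := by simpa using (toM v).rank_le_card_width
  constructor
  · intro h
    refine ⟨fun h' => ?_, by_contra fun h' => ?_⟩
    · rw [← h0] at h'; omega
    · rw [← ne_eq, ← h2] at h'; omega
  · rintro ⟨h, h'⟩
    have : (toM v).rank ≠ 0 := fun e => h (h0.mp e)
    have : (toM v).rank ≠ 2 := fun e => h2.mp e h'
    omega

/-- The congruence `A ↦ T A T*` in coordinates. -/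
def conj (T : Matrix (Fin 2) (Fin 2) ℂ) : V →ₗ[ℝ] V where
  toFun v := toV (T * toM v * Tᴴ)
  map_add' v w := by
    rw [toM_add, mul_add, add_mul]
    ext i; fin_cases i <;> simp [toV]
  map_smul' t v := by
    rw [toM_smul, mul_smul_comm, smul_mul_assoc]
    ext i; fin_cases i <;> simp [toV]

lemma toM_conj (T : Matrix (Fin 2) (Fin 2) ℂ) (v : V) : toM (conj T v) = T * toM v * Tᴴ :=
  toM_toV (Matrix.isHermitian_mul_mul_conjTranspose T (toM_isHermitian v))

lemma conj_surjective {T : Matrix (Fin 2) (Fin 2) ℂ} (hT : IsUnit T) (w : V) :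
    ∃ v, conj T v = w := by
  have hd := (Matrix.isUnit_iff_isUnit_det _).mp hT
  refine ⟨conj T⁻¹ w, toM_injective ?_⟩
  rw [toM_conj, toM_conj, Matrix.conjTranspose_nonsing_inv]
  have hd' : IsUnit (Tᴴ).det := by rw [Matrix.det_conjTranspose]; exact hd.star
  calc T * (T⁻¹ * toM w * Tᴴ⁻¹) * Tᴴ = (T * T⁻¹) * toM w * (Tᴴ⁻¹ * Tᴴ) := by noncomm_ring
    _ = toM w := by rw [Matrix.mul_nonsing_inv _ hd, Matrix.nonsing_inv_mul _ hd']; simp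

lemma q_conj (T : Matrix (Fin 2) (Fin 2) ℂ) (v : V) :
    q (conj T v) = Complex.normSq T.det * q v := by
  have := det_toM (conj T v)
  rw [toM_conj, Matrix.det_mul, Matrix.det_mul, Matrix.det_conjTranspose, det_toM] at this
  have h2 : ((Complex.normSq T.det * q v : ℝ) : ℂ) = q (conj T v) := by
    rw [← this, Complex.ofReal_mul, ← Complex.mul_conj]
    simp only [RCLike.star_def]; ring
  exact_mod_cast h2.symm

/-- The coordinates of the matrix `v v*` for the column vector `v = (a, c)`. -/
def rankOne (a c : ℂ) : V :=
  ![Complex.normSq a, Complex.normSq c, (a * star c).re, (a * star c).im]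

lemma exists_rankOne {R : V} (hq : q R = 0) :
    ∃ (ε : ℝ) (a c : ℂ), (ε = -1 ∨ ε = 1) ∧ R = ε • rankOne a c := by
  have hsign : ∀ x : ℝ, ∃ ε : ℝ, (ε = -1 ∨ ε = 1) ∧ x = ε * |x| := by
    intro x
    rcases le_total 0 x with h | h
    · exact ⟨1, Or.inr rfl, by rw [abs_of_nonneg h, one_mul]⟩
    · exact ⟨-1, Or.inl rfl, by rw [abs_of_nonpos h]; ring⟩
  simp only [q] at hq
  by_cases h0 : R 0 = 0
  · obtain ⟨ε, hε, he⟩ := hsign (R 1)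
    have h2 : R 2 = 0 := by rw [h0] at hq; nlinarith
    have h3 : R 3 = 0 := by rw [h0] at hq; nlinarith
    refine ⟨ε, 0, (√|R 1| : ℝ), hε, ?_⟩
    ext i; fin_cases i <;> simp [rankOne, h0, h2, h3]
    exact he
  · obtain ⟨ε, hε, he⟩ := hsign (R 0)
    obtain ⟨s, hs⟩ : ∃ s, s = √|R 0| := ⟨_, rfl⟩
    have hss : s * s = |R 0| := by rw [hs]; exact Real.mul_self_sqrt (abs_nonneg _)
    have hs0 : s ≠ 0 := by
      rintro rfl
      exact h0 (by simpa using hss.symm)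
    have hee : ε * ε = 1 := by rcases hε with rfl | rfl <;> norm_num
    rw [← hss] at he
    refine ⟨ε, (s : ℝ), ⟨ε * R 2 / s, -(ε * R 3 / s)⟩, hε, ?_⟩
    ext i; fin_cases i
    · simp [rankOne]; exact he
    · simp [rankOne, Complex.normSq_mk]
      rw [he] at hq
      field_simp
      linear_combination ε * hq + (-(s ^ 2 * R 1) - ε * (R 2 ^ 2 + R 3 ^ 2)) * hee
    · simp [rankOne]; field_simp; linear_combination (-R 2) * hee
    · simp [rankOne]; field_simp; linear_combination (-R 3) * hee

lemma b_rankOne (a c a' c' : ℂ) :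
    b (rankOne a c) (rankOne a' c') = Complex.normSq (a * c' - a' * c) := by
  simp [b, rankOne, Complex.normSq_apply]; ring

lemma conj_e0 (a c a' c' : ℂ) : conj !![a, a'; c, c'] ![1, 0, 0, 0] = rankOne a c := by
  ext i; fin_cases i <;>
  simp [conj, toV, toM, rankOne, Matrix.mul_apply, Fin.sum_univ_two, Matrix.vecHead,
    Matrix.vecTail, Complex.normSq_apply]

lemma conj_e1 (a c a' c' : ℂ) : conj !![a, a'; c, c'] ![0, 1, 0, 0] = rankOne a' c' := by
  ext i; fin_cases i <;>
  simp [conj, toV, toM, rankOne, Matrix.mul_apply, Fin.sum_univ_two, Matrix.vecHead,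
    Matrix.vecTail, Complex.normSq_apply]

/-! ### Linear similarities are congruences -/

lemma b_of_q {M : V →ₗ[ℝ] V} {κ : ℝ} (h : ∀ v, q (M v) = κ * q v) (v w : V) :
    b (M v) (M w) = κ * b v w := by
  have := q_add (M v) (M w)
  rw [← map_add, h, h, h, q_add] at this
  linarith

/-- A linear similarity for `q` with positive factor is `± T A T*` or `± T Aᵗ T*` (transposition is
`v 3 ↦ -v 3`). The images of `E₁₁, E₂₂` are `± v₁ v₁*`, `± v₂ v₂*` with equal signs, so after composing
with a congruence by `(v₁ v₂)` both are fixed; what remains is an isometry of the off-diagonal entry in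
`ℂ`, that is `z ↦ u z` or `z ↦ u z̄` with `|u| = 1`. -/
lemma exists_conj {Λ : V →ₗ[ℝ] V} {κ : ℝ} (hκ : 0 < κ) (hΛ : ∀ v, q (Λ v) = κ * q v) :
    ∃ (ε : ℝ) (T : Matrix (Fin 2) (Fin 2) ℂ), (ε = -1 ∨ ε = 1) ∧ IsUnit T ∧
      ((∀ v, Λ v = ε • conj T v) ∨ ∀ v, Λ v = ε • conj T ![v 0, v 1, v 2, -v 3]) := by
  obtain ⟨ε, a, c, hε, hE0⟩ := exists_rankOne (R := Λ ![1, 0, 0, 0]) (by rw [hΛ]; simp [q])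
  obtain ⟨ε', a', c', hε', hE1⟩ := exists_rankOne (R := Λ ![0, 1, 0, 0]) (by rw [hΛ]; simp [q])
  have hb := b_of_q hΛ ![1, 0, 0, 0] ![0, 1, 0, 0]
  rw [hE0, hE1, b_smul_left, b_smul_right, b_rankOne] at hb
  have hb1 : b ![1, 0, 0, 0] ![0, 1, 0, 0] = 1 := by simp [b]
  rw [hb1, mul_one] at hb
  have hnn := Complex.normSq_nonneg (a * c' - a' * c)
  have hεε : ε' = ε := by
    rcases hε with rfl | rfl <;> rcases hε' with rfl | rfl <;> first | rfl | (exfalso; linarith)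
  subst hεε
  have hee : ε' * ε' = 1 := by rcases hε with rfl | rfl <;> norm_num
  rw [← mul_assoc, hee, one_mul] at hb
  obtain ⟨T₀, hT₀⟩ : ∃ T₀ : Matrix (Fin 2) (Fin 2) ℂ, T₀ = !![a, a'; c, c'] := ⟨_, rfl⟩
  have hdet : Complex.normSq T₀.det = κ := by rw [hT₀, Matrix.det_fin_two_of, hb]
  have hT₀u : IsUnit T₀ := by
    rw [Matrix.isUnit_iff_isUnit_det, isUnit_iff_ne_zero, ← Complex.normSq_pos, hdet]
    exact hκ
  have e0 : Λ ![1, 0, 0, 0] = ε' • conj T₀ ![1, 0, 0, 0] := by rw [hE0, hT₀, conj_e0]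
  have e1 : Λ ![0, 1, 0, 0] = ε' • conj T₀ ![0, 1, 0, 0] := by rw [hE1, hT₀, conj_e1]
  have hpre : ∀ v, ∃ w, Λ v = ε' • conj T₀ w := by
    intro v
    obtain ⟨w, hw⟩ := conj_surjective hT₀u (ε' • Λ v)
    exact ⟨w, by rw [hw, smul_smul, hee, one_smul]⟩
  -- `w` with `Λ v = ε' • conj T₀ w` depends isometrically on `v`.
  have hbpre : ∀ v w v' w', Λ v = ε' • conj T₀ w → Λ v' = ε' • conj T₀ w' → b w w' = b v v' := by
    intro v w v' w' h h'
    have h1 := b_of_q hΛ v v'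
    rw [h, h', b_smul_left, b_smul_right, ← mul_assoc, hee, one_mul, b_of_q (q_conj T₀), hdet] at h1
    exact mul_left_cancel₀ hκ.ne' h1
  obtain ⟨f, hf⟩ := hpre ![0, 0, 1, 0]
  obtain ⟨g, hg⟩ := hpre ![0, 0, 0, 1]
  have f0 := hbpre _ _ _ _ hf e1
  have f1 := hbpre _ _ _ _ hf e0
  have g0 := hbpre _ _ _ _ hg e1
  have g1 := hbpre _ _ _ _ hg e0
  have ff := hbpre _ _ _ _ hf hf
  have gg := hbpre _ _ _ _ hg hg
  have fg := hbpre _ _ _ _ hf hg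
  simp [b] at f0 f1 g0 g1
  simp [b, f0, f1, g0, g1] at ff gg fg
  have hΛv : ∀ v : V, Λ v = ε' • conj T₀ (v 0 • ![1, 0, 0, 0] + v 1 • ![0, 1, 0, 0] + v 2 • f
      + v 3 • g) := by
    intro v
    have hv : v = v 0 • ![1, 0, 0, 0] + v 1 • ![0, 1, 0, 0] + v 2 • ![0, 0, 1, 0]
      + v 3 • ![0, 0, 0, 1] := by ext i; fin_cases i <;> simp
    conv_lhs => rw [hv]
    simp only [map_add, map_smul, e0, e1, hf, hg, smul_add, smul_comm ε']
  obtain ⟨D, hD⟩ : ∃ D : Matrix (Fin 2) (Fin 2) ℂ, D = !![⟨f 2, f 3⟩, 0; 0, 1] := ⟨_, rfl⟩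
  have hDu : IsUnit D := by
    rw [Matrix.isUnit_iff_isUnit_det, isUnit_iff_ne_zero, hD, ← Complex.normSq_pos]
    simp [Matrix.det_fin_two_of, Complex.normSq_mk]
    linarith
  have hcc : ∀ v, conj (T₀ * D) v = conj T₀ (conj D v) := by
    intro v
    apply toM_injective
    rw [toM_conj, toM_conj, toM_conj, Matrix.conjTranspose_mul]
    simp only [Matrix.mul_assoc]
  have hDv : ∀ v, conj D v = ![v 0, v 1, f 2 * v 2 - f 3 * v 3, f 3 * v 2 + f 2 * v 3] := by
    intro v
    have hn : f 2 * f 2 + f 3 * f 3 = 1 := by linarith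
    rw [hD]
    ext i; fin_cases i <;>
    simp [conj, toV, toM, Matrix.mul_apply, Fin.sum_univ_two, Matrix.vecHead, Matrix.vecTail]
    · linear_combination v 0 * hn
    · ring
  have hcase : (g 2 = -f 3 ∧ g 3 = f 2) ∨ (g 2 = f 3 ∧ g 3 = -f 2) := by
    have hs : (f 2 * g 3 - f 3 * g 2) ^ 2 = 1 := by
      linear_combination (-(1 / 2) * (g 2 ^ 2 + g 3 ^ 2)) * ff - (1 / 2) * gg
        + (1 / 2) * (f 2 * g 2 + f 3 * g 3) * fg
    rcases sq_eq_sq_iff_eq_or_eq_neg.mp (hs.trans (one_pow 2).symm) with h | h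
    · left
      have hz : (g 2 + f 3) ^ 2 + (g 3 - f 2) ^ 2 = 0 := by
        linear_combination (-(1 / 2)) * ff - (1 / 2) * gg - 2 * h
      constructor <;> nlinarith [sq_nonneg (g 2 + f 3), sq_nonneg (g 3 - f 2)]
    · right
      have hz : (g 2 - f 3) ^ 2 + (g 3 + f 2) ^ 2 = 0 := by
        linear_combination (-(1 / 2)) * ff - (1 / 2) * gg + 2 * h
      constructor <;> nlinarith [sq_nonneg (g 2 - f 3), sq_nonneg (g 3 + f 2)]
  refine ⟨ε', T₀ * D, hε, hT₀u.mul hDu, ?_⟩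
  rcases hcase with ⟨h2, h3⟩ | ⟨h2, h3⟩
  · left
    intro v
    rw [hΛv, hcc, hDv]
    congr 2
    ext i; fin_cases i <;> simp [-Matrix.cons_add, -Matrix.add_cons, f0, f1, g0, g1, h2, h3] <;> ring
  · right
    intro v
    rw [hΛv, hcc, hDv]
    congr 2
    ext i; fin_cases i <;> simp [-Matrix.cons_add, -Matrix.add_cons, f0, f1, g0, g1, h2, h3] <;> ring

end HermAdj

open HermAdj in
theorem adjacency_preserver_on_two_by_two_hermitian_matrices
    (φ : Herm2 → Herm2)
    (hφ : ∀ A B : Herm2, (A.1 - B.1).rank = 1 → ((φ A).1 - (φ B).1).rank = 1) :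
    (∃ (S : Herm2) (R : Matrix (Fin 2) (Fin 2) ℂ) (ρ : Herm2 → ℝ),
       R.IsHermitian ∧ R * R = R ∧ R.rank = 1 ∧
       ∀ A : Herm2, (φ A).1 = (ρ A : ℂ) • R + S.1) ∨
    (∃ (c : ℝ) (T : Matrix (Fin 2) (Fin 2) ℂ) (S : Herm2),
       (c = -1 ∨ c = 1) ∧ IsUnit T ∧
       ((∀ A : Herm2, (φ A).1 = (c : ℂ) • (T * A.1 * Tᴴ) + S.1) ∨
        (∀ A : Herm2, (φ A).1 = (c : ℂ) • (T * A.1ᵀ * Tᴴ) + S.1))) := by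
  obtain ⟨f, hf⟩ : ∃ f : V → V, f = fun v => toV (φ ⟨toM v, toM_isHermitian v⟩).1 := ⟨_, rfl⟩
  have hfM : ∀ v, toM (f v) = (φ ⟨toM v, toM_isHermitian v⟩).1 := by
    intro v
    rw [hf]
    exact toM_toV (φ _).2
  have hφf : ∀ A, (φ A).1 = toM (f (toV A.1)) := by
    intro A
    rw [hfM]
    congr 2
    exact Subtype.ext (toM_toV A.2).symm
  have hpres : Preserves f := by
    intro x y hxy hq
    have h1 := hφ ⟨toM x, toM_isHermitian x⟩ ⟨toM y, toM_isHermitian y⟩ (by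
      rw [← toM_sub, rank_toM]; exact ⟨sub_ne_zero.mpr hxy, hq⟩)
    rw [← hfM, ← hfM, ← toM_sub, rank_toM] at h1
    exact ⟨sub_ne_zero.mp h1.1, h1.2⟩
  by_cases hdeg : ∃ S R : V, R ≠ 0 ∧ q R = 0 ∧ ∀ X, ∃ t : ℝ, f X = t • R + S
  · left
    obtain ⟨S, R, hR, hqR, hX⟩ := hdeg
    choose t ht using hX
    -- A nonzero null matrix has nonzero trace; dividing by the trace gives a projection.
    have htr : R 0 + R 1 ≠ 0 := by
      intro h
      have h1 : R 1 = -R 0 := by linarith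
      have hq' := hqR
      rw [q, h1] at hq'
      have z0 : R 0 = 0 := by nlinarith [sq_nonneg (R 0), sq_nonneg (R 2), sq_nonneg (R 3)]
      have z2 : R 2 = 0 := by nlinarith [sq_nonneg (R 0), sq_nonneg (R 2), sq_nonneg (R 3)]
      have z3 : R 3 = 0 := by nlinarith [sq_nonneg (R 0), sq_nonneg (R 2), sq_nonneg (R 3)]
      exact hR (by ext i; fin_cases i <;> simp [h1, z0, z2, z3])
    obtain ⟨R', hR'⟩ : ∃ R' : V, R' = (R 0 + R 1)⁻¹ • R := ⟨_, rfl⟩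
    have hqR' : q R' = 0 := by rw [hR', q_smul, hqR, mul_zero]
    have htr' : R' 1 = 1 - R' 0 := by
      rw [hR']; simp; field_simp; ring
    refine ⟨⟨toM S, toM_isHermitian S⟩, toM R', fun A => t (toV A.1) * (R 0 + R 1),
      toM_isHermitian _, ?_, (rank_toM _).mpr ⟨?_, hqR'⟩, fun A => ?_⟩
    · rw [q, htr'] at hqR'
      ext i j
      fin_cases i <;> fin_cases j <;>
        simp [toM, Matrix.mul_apply, Fin.sum_univ_two, Complex.ext_iff, htr'] <;>
        first | linarith | (constructor <;> linarith)
    · rw [hR']; exact smul_ne_zero (inv_ne_zero htr) hR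
    · rw [hφf, ht, toM_add, ← toM_smul, hR', smul_smul, mul_assoc, mul_inv_cancel₀ htr, mul_one]
  · right
    have hn := nonadj_of_nondegenerate hpres hdeg
    obtain ⟨Λ, κ, hκ, hΛ, hfΛ⟩ := linear_of_nondegenerate (φ := fun v => f v - f 0)
      (fun x y hxy hq => by
        obtain ⟨h1, h2⟩ := hpres x y hxy hq
        simpa [h1] using h2)
      (sub_self _) (fun x y hxy => by simpa using hn x y hxy)
    obtain ⟨ε, T, hε, hT, h⟩ := exists_conj hκ hΛ
    refine ⟨ε, T, ⟨toM (f 0), toM_isHermitian _⟩, hε, hT, ?_⟩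
    have hfv : ∀ v, f v = Λ v + f 0 := fun v => by rw [← hfΛ]; simp
    rcases h with h | h
    · left
      intro A
      rw [hφf, hfv, h, toM_add, toM_smul, toM_conj, toM_toV A.2]
    · right
      intro A
      rw [hφf, hfv, h, toM_add, toM_smul, toM_conj]
      congr 4
      rw [← toM_toV A.2]
      ext i j
      fin_cases i <;> fin_cases j <;> simp [toM] <;> simp [toV]
end
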